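/- (Interior smoothness and derivative estimates for s-harmonic functions.) Let n ≥ 1 and s ∈ (0,1). For every multi-index β there exists a constant C > 0 depending only on n, s and β such that the following holds: for every r > 0 and every bounded continuous function u : ℝⁿ → ℝ that is s-harmonic at every point of the ball B_r, the restriction of u to B_{r/2} is infinitely differentiable, and sup_{x ∈ B_{r/2}} |D^β u(x)| ≤ C r^{−|β|} sup_{y ∈ ℝⁿ ∖ B_r} |u(y)|. -/

import Mathlib

open MeasureTheory Filter Metric Set
open scoped Topology

/-- The partial derivative of `f : ℝⁿ → ℝ` in the `i`-th coordinate direction. -/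
noncomputable def partialDeriv (n : ℕ) (i : Fin n)
    (f : EuclideanSpace ℝ (Fin n) → ℝ) : EuclideanSpace ℝ (Fin n) → ℝ :=
  fun x => fderiv ℝ f x (EuclideanSpace.single i 1)

/-- The multi-index derivative `D^β f = ∂₁^{β₁} ⋯ ∂ₙ^{βₙ} f`. -/
noncomputable def multiDeriv (n : ℕ) (β : Fin n → ℕ)
    (f : EuclideanSpace ℝ (Fin n) → ℝ) : EuclideanSpace ℝ (Fin n) → ℝ :=
  ((List.ofFn (fun i : Fin n => (partialDeriv n i)^[β i])).foldr (· ∘ ·) id) f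

namespace SHarm

/-- Euclidean space. -/
abbrev Eu (n : ℕ) := EuclideanSpace ℝ (Fin n)

/-- The kernel of the fractional Laplacian. -/
noncomputable def K (n : ℕ) (s : ℝ) (z : Eu n) : ℝ := ‖z‖ ^ (-((n : ℝ) + 2 * s))

/-- The second difference. -/
noncomputable def D2 {n : ℕ} {F : Type} [NormedAddCommGroup F] [NormedSpace ℝ F]
    (f : Eu n → F) (x z : Eu n) : F := (2 : ℝ) • f x - f (x + z) - f (x - z)

/-- The (doubled) fractional Laplacian. -/
noncomputable def T {n : ℕ} (s : ℝ) {F : Type} [NormedAddCommGroup F] [NormedSpace ℝ F]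
    (f : Eu n → F) (x : Eu n) : F := ∫ z, K n s z • D2 f x z

/-- Smooth functions supported in the closed unit ball. -/
def Cc {n : ℕ} {F : Type} [NormedAddCommGroup F] [NormedSpace ℝ F]
    (f : Eu n → F) : Prop := ContDiff ℝ (⊤ : ℕ∞) f ∧ ∀ x, 1 < ‖x‖ → f x = 0

lemma K_nonneg {n : ℕ} {s : ℝ} (z : Eu n) : 0 ≤ K n s z := Real.rpow_nonneg (norm_nonneg _) _

lemma K_meas {n : ℕ} {s : ℝ} : Measurable (K n s) := by unfold K; fun_prop

lemma K_neg {n : ℕ} {s : ℝ} (z : Eu n) : K n s (-z) = K n s z := by simp [K]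

lemma K_int {n : ℕ} (hn : 1 ≤ n) {s : ℝ} (hs : s ∈ Ioo (0:ℝ) 1) :
    Integrable (fun z : Eu n => K n s z * min 1 (‖z‖ ^ 2)) := by
  have : Nonempty (Fin n) := ⟨⟨0, hn⟩⟩
  have h := integrable_fun_norm_addHaar (E := Eu n) volume
    (f := fun y : ℝ => y ^ (-((n : ℝ) + 2 * s)) * min 1 (y ^ 2))
  refine h.2 ?_
  simp only [finrank_euclideanSpace, Fintype.card_fin, smul_eq_mul]
  rw [← Ioc_union_Ioi_eq_Ioi (zero_le_one (α := ℝ))]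
  obtain ⟨h0, h1⟩ := hs
  refine IntegrableOn.union ?_ ?_
  · have : IntegrableOn (fun y : ℝ => y ^ (1 - 2 * s)) (Ioc 0 1) := by
      rw [← intervalIntegrable_iff_integrableOn_Ioc_of_le zero_le_one]
      exact intervalIntegral.intervalIntegrable_rpow' (by linarith)
    refine this.congr_fun ?_ measurableSet_Ioc
    intro y hy
    obtain ⟨hy0, hy1⟩ := hy
    have : min 1 (y ^ 2) = y ^ 2 := min_eq_right (by nlinarith)
    simp only [this]
    rw [← Real.rpow_natCast y (n-1), ← Real.rpow_natCast y 2, ← Real.rpow_add hy0, ← Real.rpow_add hy0]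
    congr 1
    rw [Nat.cast_sub hn]; push_cast; ring
  · have : IntegrableOn (fun y : ℝ => y ^ (-1 - 2 * s)) (Ioi 1) :=
      integrableOn_Ioi_rpow_of_lt (by linarith) zero_lt_one
    refine this.congr_fun ?_ measurableSet_Ioi
    intro y (hy : 1 < y)
    have hy0 : 0 < y := by linarith
    have : min 1 (y ^ 2) = 1 := min_eq_left (by nlinarith)
    simp only [this, mul_one]
    rw [← Real.rpow_natCast y (n-1), ← Real.rpow_add hy0]
    congr 1
    rw [Nat.cast_sub hn]; push_cast; ring

lemma K_int_out {n : ℕ} (hn : 1 ≤ n) {s : ℝ} (hs : s ∈ Ioo (0:ℝ) 1) {ε : ℝ} (hε : 0 < ε) :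
    IntegrableOn (K n s) {z | ε < ‖z‖} := by
  have h := ((K_int hn hs).const_mul (1 / min 1 (ε^2))).integrableOn (s := {z | ε < ‖z‖})
  have hms : MeasurableSet {z : Eu n | ε < ‖z‖} := measurableSet_lt measurable_const measurable_norm
  refine h.mono' K_meas.aestronglyMeasurable ?_
  refine (ae_restrict_iff' hms).2 (ae_of_all _ fun z hz => ?_)
  have hz : ε < ‖z‖ := hz
  rw [Real.norm_of_nonneg (K_nonneg z)]
  have h1 : 0 < min 1 (ε^2) := by positivity
  have h2 : min 1 (ε^2) ≤ min 1 (‖z‖^2) := min_le_min_left _ (by gcongr)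
  rw [div_mul_eq_mul_div, one_mul, le_div_iff₀ h1]
  exact mul_le_mul_of_nonneg_left h2 (K_nonneg z)

section
variable {n : ℕ} {F : Type} [NormedAddCommGroup F] [NormedSpace ℝ F]

lemma Cc.hcs {f : Eu n → F} (hf : Cc f) : HasCompactSupport f := by
  refine HasCompactSupport.intro (isCompact_closedBall 0 1) ?_
  intro x hx
  exact hf.2 x (by simpa using hx)

lemma Cc.cont {f : Eu n → F} (hf : Cc f) : Continuous f := hf.1.continuous

lemma Cc.fderiv {f : Eu n → F} (hf : Cc f) : Cc (fderiv ℝ f) := by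
  refine ⟨hf.1.fderiv_right (by simp), ?_⟩
  intro x hx
  have : f =ᶠ[𝓝 x] fun _ => 0 := by
    have : {y : Eu n | 1 < ‖y‖} ∈ 𝓝 x := (isOpen_lt continuous_const continuous_norm).mem_nhds hx
    filter_upwards [this] with y hy using hf.2 y hy
  rw [this.fderiv_eq]; simp

lemma Cc.bdd {f : Eu n → F} (hf : Cc f) : ∃ C, 0 ≤ C ∧ ∀ x, ‖f x‖ ≤ C := by
  obtain ⟨C, hC⟩ := hf.hcs.exists_bound_of_continuous hf.cont
  exact ⟨C, (norm_nonneg _).trans (hC 0), hC⟩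

lemma Cc.D2_sq {f : Eu n → F} (hf : Cc f) : ∃ C, 0 ≤ C ∧ ∀ x z, ‖D2 f x z‖ ≤ C * ‖z‖ ^ 2 := by
  obtain ⟨L, hL⟩ := ContDiff.lipschitzWith_of_hasCompactSupport hf.fderiv.hcs
    hf.fderiv.1 (by simp)
  have key : ∀ x z, ‖f (x + z) - f x - _root_.fderiv ℝ f x z‖ ≤ L * ‖z‖ ^ 2 := by
    intro x z
    have := Convex.norm_image_sub_le_of_norm_hasFDerivWithin_le' (𝕜 := ℝ) (f := f)
      (f' := _root_.fderiv ℝ f) (φ := _root_.fderiv ℝ f x) (s := closedBall x ‖z‖) (x := x) (y := x + z)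
      (C := L * ‖z‖)
      (fun y _ => ((hf.1.differentiable (by simp)) y).hasFDerivAt.hasFDerivWithinAt)
      (fun y hy => by
        have := hL.dist_le_mul y x
        rw [dist_eq_norm] at this
        refine this.trans ?_
        gcongr
        exact hy)
      (convex_closedBall _ _) (by simp) (by simp)
    simp only [add_sub_cancel_left] at this
    calc _ ≤ _ := this
      _ = _ := by ring
  refine ⟨2 * L, by positivity, fun x z => ?_⟩
  have h1 := key x z
  have h2 := key x (-z)
  have : D2 f x z = -(f (x + z) - f x - _root_.fderiv ℝ f x z) -
    (f (x + -z) - f x - _root_.fderiv ℝ f x (-z)) := by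
    unfold D2
    rw [map_neg, two_smul, sub_eq_add_neg x z]; abel
  rw [this]
  refine (norm_sub_le _ _).trans ?_
  rw [norm_neg]
  rw [norm_neg] at h2
  linarith

lemma Cc.D2_min {f : Eu n → F} (hf : Cc f) :
    ∃ C, 0 ≤ C ∧ ∀ x z, ‖D2 f x z‖ ≤ C * min 1 (‖z‖ ^ 2) := by
  obtain ⟨C1, h1, H1⟩ := hf.D2_sq
  obtain ⟨C2, h2, H2⟩ := hf.bdd
  refine ⟨max C1 (4 * C2), by positivity, fun x z => ?_⟩
  rw [mul_min_of_nonneg _ _ (by positivity)]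
  refine le_min ?_ ((H1 x z).trans (by gcongr; exact le_max_left _ _))
  have : ‖D2 f x z‖ ≤ 4 * C2 := by
    unfold D2
    refine (norm_sub_le _ _).trans ?_
    have := norm_sub_le ((2:ℝ) • f x) (f (x+z))
    rw [norm_smul] at this
    norm_num at this
    have := H2 x; have := H2 (x+z); have := H2 (x-z)
    linarith
  rw [mul_one]
  exact this.trans (le_max_right _ _)

lemma D2_cont {f : Eu n → F} (hf : Continuous f) :
    Continuous (fun p : Eu n × Eu n => D2 f p.1 p.2) := by
  unfold D2; fun_prop

lemma D2_cont' {f : Eu n → F} (hf : Continuous f) (x : Eu n) :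
    Continuous (fun z : Eu n => D2 f x z) := by
  unfold D2; fun_prop

lemma Cc.KD2_int (hn : 1 ≤ n) {s : ℝ} (hs : s ∈ Ioo (0:ℝ) 1) {f : Eu n → F} (hf : Cc f) (x : Eu n) :
    Integrable (fun z => K n s z • D2 f x z) := by
  obtain ⟨C, h0, hC⟩ := hf.D2_min
  refine ((K_int hn hs).const_mul C).mono'
    (K_meas.aestronglyMeasurable.smul (D2_cont' hf.cont x).aestronglyMeasurable) (ae_of_all _ fun z => ?_)
  rw [norm_smul, Real.norm_of_nonneg (K_nonneg z)]
  have := mul_le_mul_of_nonneg_left (hC x z) (K_nonneg (s := s) z)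
  linarith

lemma Cc.T_hasFDerivAt (hn : 1 ≤ n) {s : ℝ} (hs : s ∈ Ioo (0:ℝ) 1) {f : Eu n → F} (hf : Cc f) (x : Eu n) :
    HasFDerivAt (T s f) (T s (_root_.fderiv ℝ f) x) x := by
  obtain ⟨C, h0, hC⟩ := hf.fderiv.D2_min
  refine hasFDerivAt_integral_of_dominated_of_fderiv_le (s := univ)
    (bound := fun z => C * (K n s z * min 1 (‖z‖^2)))
    (F' := fun x z => K n s z • D2 (_root_.fderiv ℝ f) x z) univ_mem
    (Eventually.of_forall fun y => (hf.KD2_int hn hs y).aestronglyMeasurable) (hf.KD2_int hn hs x)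
    (hf.fderiv.KD2_int hn hs x).aestronglyMeasurable ?_ ((K_int hn hs).const_mul C) ?_
  · refine ae_of_all _ fun z y _ => ?_
    rw [norm_smul, Real.norm_of_nonneg (K_nonneg z)]
    have := mul_le_mul_of_nonneg_left (hC y z) (K_nonneg (s := s) z)
    linarith
  · refine ae_of_all _ fun z y _ => ?_
    have hd : ∀ w, HasFDerivAt f (_root_.fderiv ℝ f w) w := fun w =>
      ((hf.1.differentiable (by simp)) w).hasFDerivAt
    refine HasFDerivAt.const_smul ?_ _
    refine HasFDerivAt.sub (HasFDerivAt.sub ((hd y).const_smul _) ?_) ?_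
    · exact (hasFDerivAt_comp_add_right z).2 (hd (y + z))
    · have := (hasFDerivAt_comp_add_right (-z)).2 (hd (y + -z))
      simpa only [← sub_eq_add_neg] using this

/-- Integral bound used for everything. -/
lemma Cc.T_bound (hn : 1 ≤ n) {s : ℝ} (hs : s ∈ Ioo (0:ℝ) 1) {f : Eu n → F} (hf : Cc f) :
    ∃ C, 0 ≤ C ∧ ∀ x, ∫ z, K n s z * ‖D2 f x z‖ ≤ C * (1 + ‖x‖) ^ (-((n:ℝ) + 2 * s)) := by
  obtain ⟨C, h0, hC⟩ := hf.D2_min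
  obtain ⟨hs0, hs1⟩ := hs
  have hp : 0 < (n:ℝ) + 2 * s := by positivity
  set p := (n:ℝ) + 2 * s with hpdef
  set I := ∫ z, K n s z * min 1 (‖z‖^2) with hI
  have hI0 : 0 ≤ I := integral_nonneg fun z => mul_nonneg (K_nonneg z) (by positivity)
  set J := ∫ z, ‖f z‖ with hJ
  have hJ0 : 0 ≤ J := integral_nonneg fun z => norm_nonneg _
  have hfi : Integrable (fun z => ‖f z‖) := (hf.cont.integrable_of_hasCompactSupport hf.hcs).norm
  refine ⟨C * I * 3 ^ p + 2 * J * 3 ^ p, by positivity, fun x => ?_⟩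
  have hKDi : Integrable (fun z => K n s z * ‖D2 f x z‖) := by
    have := (hf.KD2_int hn ⟨hs0, hs1⟩ x).norm
    refine this.congr (ae_of_all _ fun z => ?_)
    simp only [norm_smul, Real.norm_of_nonneg (K_nonneg z)]
  rcases le_or_gt ‖x‖ 2 with hx | hx
  · have h1 : ∫ z, K n s z * ‖D2 f x z‖ ≤ C * I := by
      rw [hI, ← integral_const_mul]
      refine integral_mono hKDi ((K_int hn ⟨hs0, hs1⟩).const_mul C) fun z => ?_
      have := mul_le_mul_of_nonneg_left (hC x z) (K_nonneg (s := s) z)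
      simp only; linarith
    have h2 : 1 ≤ 3 ^ p * (1 + ‖x‖) ^ (-p) := by
      rw [Real.rpow_neg (by positivity), ← div_eq_mul_inv, one_le_div (by positivity)]
      exact Real.rpow_le_rpow (by positivity) (by linarith) hp.le
    have h3 : 0 ≤ 2 * J * 3 ^ p * (1 + ‖x‖) ^ (-p) := by positivity
    have h4 := mul_le_mul_of_nonneg_left h2 (mul_nonneg h0 hI0)
    nlinarith
  · have hx0 : f x = 0 := hf.2 x (by linarith)
    set c : ℝ := 3 ^ p * (1 + ‖x‖) ^ (-p) with hc
    have hKc : ∀ z : Eu n, ‖x‖ - 1 ≤ ‖z‖ → K n s z ≤ c := by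
      intro z hz
      have : (1 + ‖x‖) / 3 ≤ ‖z‖ := by linarith
      have h5 : c = ((1 + ‖x‖) / 3) ^ (-p) := by
        rw [Real.div_rpow (by positivity) (by norm_num), hc, Real.rpow_neg (by norm_num : (0:ℝ) ≤ 3)]
        field_simp
      rw [h5]
      exact Real.rpow_le_rpow_of_nonpos (by positivity) this (by linarith)
    have hA : Integrable (fun z => ‖f (x + z)‖) := hfi.comp_add_left x
    have hB : Integrable (fun z => ‖f (x - z)‖) := hfi.comp_sub_left x
    have h1 : ∫ z, K n s z * ‖D2 f x z‖ ≤ ∫ z, c * (‖f (x + z)‖ + ‖f (x - z)‖) := by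
      refine integral_mono hKDi ((hA.add hB).const_mul c) fun z => ?_
      simp only
      have hn1 : ‖D2 f x z‖ ≤ ‖f (x + z)‖ + ‖f (x - z)‖ := by
        unfold D2
        rw [hx0, smul_zero, zero_sub]
        refine (norm_sub_le _ _).trans ?_
        rw [norm_neg]
      refine (mul_le_mul_of_nonneg_left hn1 (K_nonneg z)).trans ?_
      by_cases hz : ‖x‖ - 1 ≤ ‖z‖
      · exact mul_le_mul_of_nonneg_right (hKc z hz) (by positivity)
      · push Not at hz
        have e1 : f (x + z) = 0 := hf.2 _ (by
          have := norm_sub_le (x + z) z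
          rw [add_sub_cancel_right] at this; linarith)
        have e2 : f (x - z) = 0 := hf.2 _ (by
          have := norm_add_le (x - z) z
          rw [sub_add_cancel] at this; linarith)
        simp [e1, e2]
    rw [integral_const_mul, integral_add hA hB] at h1
    have e1 : ∫ z, ‖f (x + z)‖ = J := integral_add_left_eq_self (fun z => ‖f z‖) x
    have e2 : ∫ z, ‖f (x - z)‖ = J := integral_sub_left_eq_self (fun z => ‖f z‖) volume x
    rw [e1, e2] at h1
    have h3 : 0 ≤ C * I * 3 ^ p * (1 + ‖x‖) ^ (-p) := by positivity
    rw [hc] at h1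
    nlinarith

lemma Cc.T_le (hn : 1 ≤ n) {s : ℝ} (hs : s ∈ Ioo (0:ℝ) 1) {f : Eu n → F} (hf : Cc f) :
    ∃ C, 0 ≤ C ∧ ∀ x, ‖T s f x‖ ≤ C * (1 + ‖x‖) ^ (-((n:ℝ) + 2 * s)) := by
  obtain ⟨C, h0, hC⟩ := hf.T_bound hn hs
  refine ⟨C, h0, fun x => (norm_integral_le_integral_norm _).trans ((le_of_eq ?_).trans (hC x))⟩
  refine integral_congr_ae (ae_of_all _ fun z => ?_)
  simp only [norm_smul, Real.norm_of_nonneg (K_nonneg z)]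

/-- Smooth functions all of whose derivatives decay at rate `α`. -/
def Dec (α : ℝ) (f : Eu n → F) : Prop := ContDiff ℝ (⊤ : ℕ∞) f ∧
  ∀ k : ℕ, ∃ C, 0 ≤ C ∧ ∀ x, ‖iteratedFDeriv ℝ k f x‖ ≤ C * (1 + ‖x‖) ^ (-α)

lemma Dec.fderiv {α : ℝ} {f : Eu n → F} (hf : Dec α f) : Dec α (fderiv ℝ f) := by
  refine ⟨hf.1.fderiv_right (by simp), fun k => ?_⟩
  obtain ⟨C, h0, hC⟩ := hf.2 (k+1)
  exact ⟨C, h0, fun x => by rw [norm_iteratedFDeriv_fderiv]; exact hC x⟩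

lemma Dec.le {α : ℝ} {f : Eu n → F} (hf : Dec α f) : ∃ C, 0 ≤ C ∧ ∀ x, ‖f x‖ ≤ C * (1 + ‖x‖) ^ (-α) := by
  obtain ⟨C, h0, hC⟩ := hf.2 0
  exact ⟨C, h0, fun x => by simpa using hC x⟩

lemma Dec.cont {α : ℝ} {f : Eu n → F} (hf : Dec α f) : Continuous f := hf.1.continuous

end

lemma T_contDiff {n : ℕ} (hn : 1 ≤ n) {s : ℝ} (hs : s ∈ Ioo (0:ℝ) 1) (k : ℕ) :
    ∀ {F : Type} [NormedAddCommGroup F] [NormedSpace ℝ F] {f : Eu n → F}, Cc f →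
    ContDiff ℝ k (T s f) ∧
    ∃ C, 0 ≤ C ∧ ∀ x, ‖iteratedFDeriv ℝ k (T s f) x‖ ≤ C * (1 + ‖x‖) ^ (-((n:ℝ) + 2 * s)) := by
  induction k with
  | zero =>
    intro F _ _ f hf
    refine ⟨?_, ?_⟩
    · have : Differentiable ℝ (T s f) := fun x => (hf.T_hasFDerivAt hn hs x).differentiableAt
      simpa using this.continuous
    · obtain ⟨C, h0, hC⟩ := hf.T_le hn hs
      exact ⟨C, h0, fun x => by simpa using hC x⟩
  | succ k ih =>
    intro F _ _ f hf
    have hfd : fderiv ℝ (T s f) = T s (fderiv ℝ f) := funext fun x => (hf.T_hasFDerivAt hn hs x).fderiv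
    obtain ⟨h1, C, h0, hC⟩ := ih hf.fderiv
    refine ⟨?_, C, h0, fun x => ?_⟩
    · exact contDiff_succ_iff_hasFDerivAt.2 ⟨_, h1, fun x => hf.T_hasFDerivAt hn hs x⟩
    · rw [← norm_iteratedFDeriv_fderiv, hfd]; exact hC x

lemma Cc.T_dec {n : ℕ} (hn : 1 ≤ n) {s : ℝ} (hs : s ∈ Ioo (0:ℝ) 1)
    {F : Type} [NormedAddCommGroup F] [NormedSpace ℝ F] {f : Eu n → F} (hf : Cc f) :
    Dec ((n:ℝ) + 2 * s) (T s f) :=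
  ⟨contDiff_infty.2 fun k => (T_contDiff hn hs k hf).1, fun k => (T_contDiff hn hs k hf).2⟩

end SHarm

namespace SHarm

/-- Radial averaging operator. -/
noncomputable def R {n : ℕ} (j : ℕ) {F : Type} [NormedAddCommGroup F] [NormedSpace ℝ F]
    (f : Eu n → F) (x : Eu n) : F := ∫ t in (0:ℝ)..1, t ^ j • f (t • x)

lemma rpow_scale {α r t : ℝ} (hα : 0 ≤ α) (hr : 0 ≤ r) (ht : 0 < t) (ht1 : t ≤ 1) :
    (1 + t * r) ^ (-α) ≤ t ^ (-α) * (1 + r) ^ (-α) := by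
  rw [← Real.mul_rpow ht.le (by positivity)]
  exact Real.rpow_le_rpow_of_nonpos (by positivity) (by nlinarith) (by linarith)

lemma rpow_le_one' {α r : ℝ} (hα : 0 ≤ α) (hr : 0 ≤ r) : (1 + r) ^ (-α) ≤ 1 :=
  Real.rpow_le_one_of_one_le_of_nonpos (by linarith) (by linarith)

section
variable {n : ℕ} {F : Type} [NormedAddCommGroup F] [NormedSpace ℝ F]

lemma Dec.bdd {α : ℝ} (hα : 0 ≤ α) {f : Eu n → F} (hf : Dec α f) : ∃ C, 0 ≤ C ∧ ∀ x, ‖f x‖ ≤ C := by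
  obtain ⟨C, h0, hC⟩ := hf.le
  exact ⟨C, h0, fun x => (hC x).trans (mul_le_of_le_one_right h0 (rpow_le_one' hα (norm_nonneg _)))⟩

lemma Dec.R_hasFDerivAt {α : ℝ} (hα : 0 ≤ α) {f : Eu n → F} (hf : Dec α f) (j : ℕ) (x : Eu n) :
    HasFDerivAt (R j f) (R (j+1) (_root_.fderiv ℝ f) x) x := by
  obtain ⟨C, h0, hC⟩ := hf.fderiv.bdd hα
  have hfc := hf.cont
  have hfc' := hf.fderiv.cont
  refine intervalIntegral.hasFDerivAt_integral_of_dominated_of_fderiv_le (s := univ)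
    (bound := fun _ => C)
    (F' := fun x t => t ^ (j+1) • _root_.fderiv ℝ f (t • x)) univ_mem
    (Eventually.of_forall fun y => (by fun_prop : Continuous fun t : ℝ => t ^ j • f (t • y)).aestronglyMeasurable)
    ((by fun_prop : Continuous fun t : ℝ => t ^ j • f (t • x)).intervalIntegrable _ _)
    (by fun_prop : Continuous fun t : ℝ => t ^ (j+1) • _root_.fderiv ℝ f (t • x)).aestronglyMeasurable ?_ (by simp) ?_
  · refine ae_of_all _ fun t ht y _ => ?_
    rw [uIoc_of_le zero_le_one] at ht
    rw [norm_smul, norm_pow, Real.norm_of_nonneg ht.1.le]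
    calc _ ≤ 1 * C := by
          gcongr
          · exact pow_le_one₀ ht.1.le ht.2
          · exact hC _
      _ = C := one_mul _
  · refine ae_of_all _ fun t ht y _ => ?_
    have hd : ∀ w, HasFDerivAt f (_root_.fderiv ℝ f w) w := fun w =>
      ((hf.1.differentiable (by simp)) w).hasFDerivAt
    have h2 := ((hd (t • y)).comp y ((hasFDerivAt_id y).const_smul t)).const_smul (t ^ j)
    refine h2.congr_fderiv ?_
    ext w
    simp [pow_succ, smul_smul]

lemma Dec.R_le {s : ℝ} (hs : s ∈ Ioo (0:ℝ) 1) {f : Eu n → F} (hf : Dec ((n:ℝ) + 2 * s) f) (j : ℕ)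
    (hj : n ≤ j) : ∃ C, 0 ≤ C ∧ ∀ x, ‖R j f x‖ ≤ C * (1 + ‖x‖) ^ (-((n:ℝ) + s)) := by
  obtain ⟨C, h0, hC⟩ := hf.le
  obtain ⟨hs0, hs1⟩ := hs
  have hI0 : 0 ≤ ∫ t in (0:ℝ)..1, t ^ (-s) :=
    intervalIntegral.integral_nonneg zero_le_one fun t ht => Real.rpow_nonneg ht.1 _
  refine ⟨C * ∫ t in (0:ℝ)..1, t ^ (-s), by positivity, fun x => ?_⟩
  have : ‖R j f x‖ ≤ ∫ t in (0:ℝ)..1, C * (1 + ‖x‖) ^ (-((n:ℝ) + s)) * t ^ (-s) := by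
    refine intervalIntegral.norm_integral_le_of_norm_le zero_le_one ?_
      ((intervalIntegral.intervalIntegrable_rpow' (by linarith)).const_mul _)
    refine ae_of_all _ fun t ht => ?_
    rw [norm_smul, norm_pow, Real.norm_of_nonneg ht.1.le]
    have h1 := hC (t • x)
    rw [norm_smul, Real.norm_of_nonneg ht.1.le] at h1
    have h2 : (1 + t * ‖x‖) ^ (-((n:ℝ) + 2 * s)) ≤ (1 + t * ‖x‖) ^ (-((n:ℝ) + s)) :=
      Real.rpow_le_rpow_of_exponent_le (by nlinarith [norm_nonneg x, ht.1]) (by linarith)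
    have h3 := rpow_scale (α := (n:ℝ) + s) (r := ‖x‖) (by positivity) (norm_nonneg x) ht.1 ht.2
    have h4 : t ^ j ≤ t ^ n := pow_le_pow_of_le_one ht.1.le ht.2 hj
    have h5 : t ^ n * t ^ (-((n:ℝ) + s)) = t ^ (-s) := by
      rw [← Real.rpow_natCast, ← Real.rpow_add ht.1]; congr 1; ring
    calc t ^ j * ‖f (t • x)‖ ≤ t ^ n * (C * (t ^ (-((n:ℝ)+s)) * (1 + ‖x‖) ^ (-((n:ℝ) + s)))) := by
          have := ht.1
          gcongr
          exact h1.trans (mul_le_mul_of_nonneg_left (h2.trans h3) h0)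
      _ = C * (1 + ‖x‖) ^ (-((n:ℝ) + s)) * (t ^ n * t ^ (-((n:ℝ) + s))) := by ring
      _ = _ := by rw [h5]
  rw [intervalIntegral.integral_const_mul] at this
  linarith

lemma Dec.R_bdd {α : ℝ} (hα : 0 ≤ α) {f : Eu n → F} (hf : Dec α f) (j : ℕ) :
    ∃ C, 0 ≤ C ∧ ∀ x, ‖R j f x‖ ≤ C := by
  obtain ⟨C, h0, hC⟩ := hf.bdd hα
  refine ⟨C, h0, fun x => ?_⟩
  have := intervalIntegral.norm_integral_le_of_norm_le_const (a := 0) (b := 1) (C := C)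
    (f := fun t : ℝ => t ^ j • f (t • x)) ?_
  · simpa [R] using this
  · intro t ht
    rw [uIoc_of_le zero_le_one] at ht
    rw [norm_smul, norm_pow, Real.norm_of_nonneg ht.1.le]
    calc _ ≤ 1 * C := by
          gcongr
          · exact pow_le_one₀ ht.1.le ht.2
          · exact hC _
      _ = C := one_mul _
end

lemma R_contDiff {n : ℕ} {s : ℝ} (hs : s ∈ Ioo (0:ℝ) 1) (k : ℕ) :
    ∀ {F : Type} [NormedAddCommGroup F] [NormedSpace ℝ F] {f : Eu n → F} (j : ℕ), n ≤ j →
    Dec ((n:ℝ) + 2 * s) f →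
    ContDiff ℝ k (R j f) ∧
    ∃ C, 0 ≤ C ∧ ∀ x, ‖iteratedFDeriv ℝ k (R j f) x‖ ≤ C * (1 + ‖x‖) ^ (-((n:ℝ) + s)) := by
  have hα : 0 ≤ (n:ℝ) + 2 * s := by have := hs.1; positivity
  induction k with
  | zero =>
    intro F _ _ f j hj hf
    refine ⟨?_, ?_⟩
    · have : Differentiable ℝ (R j f) := fun x => (hf.R_hasFDerivAt hα j x).differentiableAt
      simpa using this.continuous
    · obtain ⟨C, h0, hC⟩ := hf.R_le hs j hj
      exact ⟨C, h0, fun x => by simpa using hC x⟩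
  | succ k ih =>
    intro F _ _ f j hj hf
    have hfd : fderiv ℝ (R j f) = R (j+1) (fderiv ℝ f) := funext fun x => (hf.R_hasFDerivAt hα j x).fderiv
    obtain ⟨h1, C, h0, hC⟩ := ih (j+1) (by omega) hf.fderiv
    refine ⟨?_, C, h0, fun x => ?_⟩
    · exact contDiff_succ_iff_hasFDerivAt.2 ⟨_, h1, fun x => hf.R_hasFDerivAt hα j x⟩
    · rw [← norm_iteratedFDeriv_fderiv, hfd]; exact hC x

lemma R_radial {n : ℕ} (hn : 1 ≤ n) {s : ℝ} (hs : s ∈ Ioo (0:ℝ) 1) {A : Eu n → ℝ}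
    (hA : Dec ((n:ℝ) + 2 * s) A) (hrad : ∀ x y, ‖x‖ = ‖y‖ → A x = A y) (hA0 : ∫ x, A x = 0) :
    ∃ C, 0 ≤ C ∧ ∀ x, ‖R (n-1) A x‖ ≤ C * (1 + ‖x‖) ^ (-((n:ℝ) + s)) := by
  have : Nonempty (Fin n) := ⟨⟨0, hn⟩⟩
  obtain ⟨hs0, hs1⟩ := hs
  have hα : 0 ≤ (n:ℝ) + 2 * s := by positivity
  obtain ⟨C1, h10, hC1⟩ := hA.R_bdd hα (n-1)
  obtain ⟨C, h0, hC⟩ := hA.le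
  have hI0 : 0 ≤ ∫ t in Ioi (1:ℝ), t ^ (-1 - 2 * s) :=
    setIntegral_nonneg measurableSet_Ioi fun t (ht : 1 < t) => Real.rpow_nonneg (by linarith) _
  set I := ∫ t in Ioi (1:ℝ), t ^ (-1 - 2 * s)
  have hii : IntegrableOn (fun t : ℝ => t ^ (-1 - 2 * s)) (Ioi 1) :=
      integrableOn_Ioi_rpow_of_lt (by linarith) zero_lt_one
  have hAc := hA.cont
  refine ⟨C1 * 2 ^ ((n:ℝ) + s) + C * I * 2 ^ ((n:ℝ) + s), by positivity, fun x => ?_⟩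
  have hP : 0 ≤ (1 + ‖x‖) ^ (-((n:ℝ) + s)) := by positivity
  rcases le_or_gt ‖x‖ 1 with hx | hx
  · have h2 : 1 ≤ 2 ^ ((n:ℝ) + s) * (1 + ‖x‖) ^ (-((n:ℝ) + s)) := by
      rw [Real.rpow_neg (by positivity), ← div_eq_mul_inv, one_le_div (by positivity)]
      exact Real.rpow_le_rpow (by positivity) (by linarith) (by positivity)
    have h3 : 0 ≤ C * I * 2 ^ ((n:ℝ) + s) * (1 + ‖x‖) ^ (-((n:ℝ) + s)) := by positivity
    have h4 := mul_le_mul_of_nonneg_left h2 h10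
    have := hC1 x
    nlinarith
  · have hbound : ∀ t ∈ Ioi (1:ℝ), ‖t ^ (n-1) * A (t • x)‖ ≤ C * ‖x‖ ^ (-((n:ℝ)+s)) * t ^ (-1 - 2 * s) := by
      intro t (ht : 1 < t)
      have ht0 : 0 < t := by linarith
      have hx0 : 0 < ‖x‖ := by linarith
      rw [norm_mul, norm_pow, Real.norm_of_nonneg ht0.le]
      have h1 := hC (t • x)
      rw [norm_smul, Real.norm_of_nonneg ht0.le] at h1
      have h2 : (1 + t * ‖x‖) ^ (-((n:ℝ) + 2 * s)) ≤ (t * ‖x‖) ^ (-((n:ℝ) + 2 * s)) :=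
        Real.rpow_le_rpow_of_nonpos (by positivity) (by linarith) (by linarith)
      rw [Real.mul_rpow ht0.le hx0.le] at h2
      have h3 : ‖x‖ ^ (-((n:ℝ) + 2 * s)) ≤ ‖x‖ ^ (-((n:ℝ) + s)) :=
        Real.rpow_le_rpow_of_exponent_le hx.le (by linarith)
      have h5 : t ^ (n-1) * t ^ (-((n:ℝ) + 2 * s)) = t ^ (-1 - 2 * s) := by
        rw [← Real.rpow_natCast, ← Real.rpow_add ht0]; congr 1
        rw [Nat.cast_sub hn]; push_cast; ring
      calc t ^ (n-1) * ‖A (t • x)‖ ≤ t ^ (n-1) * (C * (t ^ (-((n:ℝ)+2 * s)) * ‖x‖ ^ (-((n:ℝ) + s)))) := by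
            gcongr
            refine h1.trans (mul_le_mul_of_nonneg_left (h2.trans ?_) h0)
            gcongr
        _ = C * ‖x‖ ^ (-((n:ℝ) + s)) * (t ^ (n-1) * t ^ (-((n:ℝ) + 2 * s))) := by ring
        _ = _ := by rw [h5]
    have hcont : Continuous (fun t : ℝ => t ^ (n-1) * A (t • x)) := by fun_prop
    have hi1 : IntegrableOn (fun t : ℝ => t ^ (n-1) * A (t • x)) (Ioi 1) :=
      Integrable.mono' (hii.const_mul _) hcont.aestronglyMeasurable
        ((ae_restrict_iff' measurableSet_Ioi).2 (ae_of_all _ hbound))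
    have hi0 : IntegrableOn (fun t : ℝ => t ^ (n-1) * A (t • x)) (Ioc 0 1) :=
      (hcont.integrableOn_Icc).mono_set Ioc_subset_Icc_self
    have hz : ∫ t in Ioi (0:ℝ), t ^ (n-1) * A (t • x) = 0 := by
      have e1 : ∫ y, A (‖x‖ • y) = 0 := by
        rw [Measure.integral_comp_smul, hA0, smul_zero]
      have e2 : ∀ y : Eu n, A (‖x‖ • y) = A (‖y‖ • x) := fun y => hrad _ _ (by
        simp [norm_smul, mul_comm])
      simp_rw [e2] at e1
      rw [integral_fun_norm_addHaar volume (fun t : ℝ => A (t • x))] at e1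
      simp only [finrank_euclideanSpace, Fintype.card_fin, smul_eq_mul, nsmul_eq_mul] at e1
      have hv : 0 < volume.real (ball (0 : Eu n) 1) :=
        ENNReal.toReal_pos (measure_ball_pos _ _ zero_lt_one).ne' measure_ball_lt_top.ne
      have hn' : (n:ℝ) ≠ 0 := by positivity
      rcases mul_eq_zero.1 e1 with h | h
      · exact absurd h hn'
      · rcases mul_eq_zero.1 h with h | h
        · exact absurd h hv.ne'
        · exact h
    rw [← Ioc_union_Ioi_eq_Ioi (zero_le_one (α := ℝ)),
      setIntegral_union (by simp) measurableSet_Ioi hi0 hi1] at hz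
    have hR : R (n-1) A x = ∫ t in Ioc (0:ℝ) 1, t ^ (n-1) * A (t • x) := by
      simp [R, intervalIntegral.integral_of_le]
    have : ‖R (n-1) A x‖ = ‖∫ t in Ioi (1:ℝ), t ^ (n-1) * A (t • x)‖ := by
      rw [hR, eq_neg_of_add_eq_zero_left hz, norm_neg]
    rw [this]
    have hle := norm_integral_le_of_norm_le (hii.const_mul (C * ‖x‖ ^ (-((n:ℝ)+s))))
      ((ae_restrict_iff' measurableSet_Ioi).2 (ae_of_all _ hbound))
    rw [integral_const_mul] at hle
    have h6 : ‖x‖ ^ (-((n:ℝ)+s)) ≤ 2 ^ ((n:ℝ)+s) * (1 + ‖x‖) ^ (-((n:ℝ)+s)) := by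
      have : ((1 + ‖x‖)/2) ^ (-((n:ℝ)+s)) = 2 ^ ((n:ℝ)+s) * (1 + ‖x‖) ^ (-((n:ℝ)+s)) := by
        rw [Real.div_rpow (by positivity) (by norm_num), Real.rpow_neg (by norm_num : (0:ℝ) ≤ 2)]
        field_simp
      rw [← this]
      exact Real.rpow_le_rpow_of_nonpos (by positivity) (by linarith) (by linarith)
    have h7 := mul_le_mul_of_nonneg_left h6 (mul_nonneg h0 hI0)
    have h3 : 0 ≤ C1 * 2 ^ ((n:ℝ) + s) * (1 + ‖x‖) ^ (-((n:ℝ) + s)) := by positivity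
    nlinarith

lemma R_dec {n : ℕ} (hn : 1 ≤ n) {s : ℝ} (hs : s ∈ Ioo (0:ℝ) 1) {A : Eu n → ℝ}
    (hA : Dec ((n:ℝ) + 2 * s) A) (hrad : ∀ x y, ‖x‖ = ‖y‖ → A x = A y) (hA0 : ∫ x, A x = 0) :
    Dec ((n:ℝ) + s) (R (n-1) A) := by
  have hα : 0 ≤ (n:ℝ) + 2 * s := by have := hs.1; positivity
  have hj : n - 1 + 1 = n := by omega
  have hd : ∀ x, HasFDerivAt (R (n-1) A) (R n (fderiv ℝ A) x) x := fun x => by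
    have := hA.R_hasFDerivAt hα (n-1) x
    rwa [hj] at this
  have hfd : fderiv ℝ (R (n-1) A) = R n (fderiv ℝ A) := funext fun x => (hd x).fderiv
  constructor
  · refine contDiff_infty.2 fun k => ?_
    have : ContDiff ℝ (k+1) (R (n-1) A) :=
      contDiff_succ_iff_hasFDerivAt.2 ⟨_, (R_contDiff hs k n le_rfl hA.fderiv).1, hd⟩
    exact this.of_le (by simp)
  · intro k
    cases k with
    | zero =>
      obtain ⟨C, h0, hC⟩ := R_radial hn hs hA hrad hA0
      exact ⟨C, h0, fun x => by simpa using hC x⟩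
    | succ k =>
      obtain ⟨C, h0, hC⟩ := (R_contDiff hs k n le_rfl hA.fderiv).2
      exact ⟨C, h0, fun x => by rw [← norm_iteratedFDeriv_fderiv, hfd]; exact hC x⟩

end SHarm

namespace SHarm

/-- Convolution. -/
noncomputable def Cv {n : ℕ} (u : Eu n → ℝ) {F : Type} [NormedAddCommGroup F] [NormedSpace ℝ F]
    (f : Eu n → F) (x : Eu n) : F := ∫ y, u y • f (x - y)

lemma jap_int {n : ℕ} {α : ℝ} (hα : (n:ℝ) < α) : Integrable (fun x : Eu n => (1 + ‖x‖) ^ (-α)) :=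
  integrable_one_add_norm (by simpa using hα)

section
variable {n : ℕ} {F : Type} [NormedAddCommGroup F] [NormedSpace ℝ F]

lemma Dec.int {α : ℝ} (hα : (n:ℝ) < α) {f : Eu n → F} (hf : Dec α f) : Integrable f := by
  obtain ⟨C, h0, hC⟩ := hf.le
  exact ((jap_int hα).const_mul C).mono' hf.cont.aestronglyMeasurable (ae_of_all _ hC)

lemma Dec.Cv_int {α : ℝ} (hα : (n:ℝ) < α) {f : Eu n → F} (hf : Dec α f) {u : Eu n → ℝ} {M : ℝ}
    (hu : Continuous u) (hM : ∀ x, |u x| ≤ M) (x : Eu n) : Integrable (fun y => u y • f (x - y)) := by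
  have h1 : Integrable (fun y => f (x - y)) := (hf.int hα).comp_sub_left x
  exact h1.bdd_smul M hu.aestronglyMeasurable (ae_of_all _ hM)

lemma Dec.Cv_le {α : ℝ} (hα : (n:ℝ) < α) {f : Eu n → F} (hf : Dec α f) :
    ∃ C, 0 ≤ C ∧ ∀ (u : Eu n → ℝ) (M : ℝ), Continuous u → (∀ x, |u x| ≤ M) → ∀ x,
      ‖Cv u f x‖ ≤ C * M := by
  refine ⟨∫ y, ‖f y‖, integral_nonneg fun _ => norm_nonneg _, fun u M hu hM x => ?_⟩
  have h1 : Integrable (fun y => f (x - y)) := (hf.int hα).comp_sub_left x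
  have := norm_integral_le_of_norm_le (f := fun y => u y • f (x - y)) (h1.norm.const_mul M)
    (ae_of_all _ fun y => by
      rw [norm_smul]
      exact mul_le_mul_of_nonneg_right (hM y) (norm_nonneg _))
  rw [integral_const_mul, integral_sub_left_eq_self (fun z => ‖f z‖) volume x] at this
  rw [mul_comm]; exact this

lemma Dec.Cv_hasFDerivAt {α : ℝ} (hα : (n:ℝ) < α) {f : Eu n → F} (hf : Dec α f) {u : Eu n → ℝ} {M : ℝ}
    (hu : Continuous u) (hM : ∀ x, |u x| ≤ M) (x : Eu n) :
    HasFDerivAt (Cv u f) (Cv u (_root_.fderiv ℝ f) x) x := by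
  obtain ⟨C, h0, hC⟩ := hf.fderiv.le
  have hM0 : 0 ≤ M := (abs_nonneg _).trans (hM 0)
  have hα0 : 0 ≤ α := (Nat.cast_nonneg n).trans hα.le
  have hji : Integrable (fun y : Eu n => (1 + ‖x - y‖) ^ (-α)) := (jap_int hα).comp_sub_left x
  refine hasFDerivAt_integral_of_dominated_of_fderiv_le (s := ball x 1)
    (bound := fun y => (M * C * 2 ^ α) * (1 + ‖x - y‖) ^ (-α))
    (F' := fun x y => u y • _root_.fderiv ℝ f (x - y)) (ball_mem_nhds _ zero_lt_one)
    (Eventually.of_forall fun y => (hf.Cv_int hα hu hM y).aestronglyMeasurable) (hf.Cv_int hα hu hM x)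
    (hf.fderiv.Cv_int hα hu hM x).aestronglyMeasurable ?_ (hji.const_mul _) ?_
  · refine ae_of_all _ fun y w hw => ?_
    rw [mem_ball, dist_eq_norm] at hw
    rw [norm_smul]
    have h1 : (1 + ‖w - y‖) ^ (-α) ≤ 2 ^ α * (1 + ‖x - y‖) ^ (-α) := by
      have : ((1 + ‖x - y‖)/2) ^ (-α) = 2 ^ α * (1 + ‖x - y‖) ^ (-α) := by
        rw [Real.div_rpow (by positivity) (by norm_num), Real.rpow_neg (by norm_num : (0:ℝ) ≤ 2)]
        field_simp
      rw [← this]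
      refine Real.rpow_le_rpow_of_nonpos (by positivity) ?_ (by linarith)
      have h3 : ‖x - y‖ ≤ ‖w - y‖ + ‖w - x‖ := by
        have := norm_sub_le (w - y) (w - x)
        simpa using this
      have := norm_nonneg (w - y)
      linarith
    calc ‖u y‖ * ‖_root_.fderiv ℝ f (w - y)‖ ≤ M * (C * (2 ^ α * (1 + ‖x - y‖) ^ (-α))) := by
          gcongr
          · exact hM y
          · exact (hC _).trans (by gcongr)
      _ = _ := by ring
  · refine ae_of_all _ fun y w _ => ?_
    have hd : ∀ w, HasFDerivAt f (_root_.fderiv ℝ f w) w := fun w =>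
      ((hf.1.differentiable (by simp)) w).hasFDerivAt
    refine HasFDerivAt.const_smul ?_ _
    have := (hasFDerivAt_comp_add_right (-y)).2 (hd (w + -y))
    simpa only [← sub_eq_add_neg] using this
end

lemma Cv_contDiff {n : ℕ} {α : ℝ} (hα : (n:ℝ) < α) (k : ℕ) :
    ∀ {F : Type} [NormedAddCommGroup F] [NormedSpace ℝ F] {f : Eu n → F}, Dec α f →
    ∃ C, 0 ≤ C ∧ ∀ (u : Eu n → ℝ) (M : ℝ), Continuous u → (∀ x, |u x| ≤ M) →
      ContDiff ℝ k (Cv u f) ∧ ∀ x, ‖iteratedFDeriv ℝ k (Cv u f) x‖ ≤ C * M := by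
  induction k with
  | zero =>
    intro F _ _ f hf
    obtain ⟨C, h0, hC⟩ := hf.Cv_le hα
    refine ⟨C, h0, fun u M hu hM => ⟨?_, fun x => by simpa using hC u M hu hM x⟩⟩
    have : Differentiable ℝ (Cv u f) := fun x => (hf.Cv_hasFDerivAt hα hu hM x).differentiableAt
    simpa using this.continuous
  | succ k ih =>
    intro F _ _ f hf
    obtain ⟨C, h0, hC⟩ := ih hf.fderiv
    refine ⟨C, h0, fun u M hu hM => ?_⟩
    have hd : ∀ x, HasFDerivAt (Cv u f) (Cv u (fderiv ℝ f) x) x := fun x => hf.Cv_hasFDerivAt hα hu hM x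
    have hfd : fderiv ℝ (Cv u f) = Cv u (fderiv ℝ f) := funext fun x => (hd x).fderiv
    obtain ⟨h1, h2⟩ := hC u M hu hM
    refine ⟨contDiff_succ_iff_hasFDerivAt.2 ⟨_, h1, hd⟩, fun x => ?_⟩
    rw [← norm_iteratedFDeriv_fderiv, hfd]; exact h2 x

/-- The scaled pairing. -/
noncomputable def H {n : ℕ} (v f : Eu n → ℝ) (t : ℝ) : ℝ := ∫ y, v (t • y) * f y

lemma H_eq {n : ℕ} (hn : 1 ≤ n) (v A : Eu n → ℝ) {a : ℝ} (ha : 0 < a) :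
    H v (R (n-1) A) a = ∫ y, v y * ∫ μ in (0:ℝ)..a⁻¹, μ ^ (n-1) * A (μ • y) := by
  have h1 : ∀ y : Eu n, v (a • y) * R (n-1) A y = (fun z => v z * R (n-1) A (a⁻¹ • z)) (a • y) := by
    intro y
    simp only [smul_smul, inv_mul_cancel₀ ha.ne', one_smul]
  unfold H
  rw [integral_congr_ae (ae_of_all _ h1)]
  rw [Measure.integral_comp_smul_of_nonneg volume (fun z => v z * R (n-1) A (a⁻¹ • z)) a (hR := ha.le), finrank_euclideanSpace, Fintype.card_fin,
    smul_eq_mul, ← integral_const_mul]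
  congr 1; ext y
  have h2 : ∫ μ in (0:ℝ)..a⁻¹, μ ^ (n-1) * A (μ • y) =
      a⁻¹ * ∫ t in (0:ℝ)..1, (fun μ => μ ^ (n-1) * A (μ • y)) (a⁻¹ * t) := by
    have := intervalIntegral.mul_integral_comp_mul_left (a := (0:ℝ)) (b := 1)
      (f := fun μ => μ ^ (n-1) * A (μ • y)) a⁻¹
    rw [this]; simp
  rw [h2, R]
  simp only [mul_pow, smul_smul, mul_assoc, smul_eq_mul]
  rw [intervalIntegral.integral_const_mul]
  have h3 : (a ^ n)⁻¹ = a⁻¹ * a⁻¹ ^ (n-1) := by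
    rw [← pow_succ', Nat.sub_add_cancel hn, inv_pow]
  rw [h3]
  simp only [mul_comm]
  ring

lemma H_diff {n : ℕ} (hn : 1 ≤ n) {s : ℝ} (hs : s ∈ Ioo (0:ℝ) 1) {A : Eu n → ℝ}
    (hA : Dec ((n:ℝ) + 2 * s) A) (hR : Dec ((n:ℝ) + s) (R (n-1) A))
    {v : Eu n → ℝ} {M : ℝ} (hv : Continuous v) (hM : ∀ x, |v x| ≤ M) {a b : ℝ} (ha : 0 < a) (hab : a ≤ b) :
    ∃ q : ℝ → ℝ, IntervalIntegrable q volume b⁻¹ a⁻¹ ∧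
      H v (R (n-1) A) a - H v (R (n-1) A) b = ∫ μ in b⁻¹..a⁻¹, q μ ∧
      ∀ μ, 0 < μ → q μ = μ⁻¹ * H v A μ⁻¹ := by
  obtain ⟨hs0, hs1⟩ := hs
  have hb : 0 < b := ha.trans_le hab
  have hba : b⁻¹ ≤ a⁻¹ := inv_anti₀ ha hab
  obtain ⟨C, h0, hC⟩ := hA.le
  have hM0 : 0 ≤ M := (abs_nonneg _).trans (hM 0)
  have hAc := hA.cont
  set p := (n:ℝ) + 2 * s with hp
  have hp0 : 0 ≤ p := by positivity
  set c := min 1 b⁻¹ with hc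
  have hc0 : 0 < c := by positivity
  -- product integrability
  have hprod : Integrable (Function.uncurry fun (y : Eu n) (μ : ℝ) => v y * (μ ^ (n-1) * A (μ • y)))
      (volume.prod (volume.restrict (Ioc b⁻¹ a⁻¹))) := by
    have hg : Integrable (fun z : Eu n × ℝ => (M * (a⁻¹ ^ (n-1) * C * c ^ (-p))) * (1 + ‖z.1‖) ^ (-p))
        (volume.prod (volume.restrict (Ioc b⁻¹ a⁻¹))) :=
      ((jap_int (by rw [hp]; linarith)).comp_fst _).const_mul _
    refine hg.mono' ?_ ?_
    · refine Continuous.aestronglyMeasurable ?_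
      unfold Function.uncurry
      fun_prop
    · have hset : ∀ᵐ z : Eu n × ℝ ∂(volume.prod (volume.restrict (Ioc b⁻¹ a⁻¹))), z.2 ∈ Ioc b⁻¹ a⁻¹ := by
        have : ∀ᵐ μ ∂(volume.restrict (Ioc b⁻¹ a⁻¹)), μ ∈ Ioc b⁻¹ a⁻¹ := ae_restrict_mem measurableSet_Ioc
        exact Measure.quasiMeasurePreserving_snd.ae this
      filter_upwards [hset] with z hz
      obtain ⟨y, μ⟩ := z
      simp only [Function.uncurry] at hz ⊢
      have hμ : 0 < μ := (by positivity : 0 < b⁻¹).trans hz.1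
      rw [norm_mul, norm_mul, norm_pow, Real.norm_of_nonneg hμ.le]
      have h1 := hC (μ • y)
      rw [norm_smul, Real.norm_of_nonneg hμ.le] at h1
      have h2 : (1 + μ * ‖y‖) ^ (-p) ≤ c ^ (-p) * (1 + ‖y‖) ^ (-p) := by
        refine le_trans ?_ (rpow_scale hp0 (norm_nonneg y) hc0 (min_le_left _ _))
        refine Real.rpow_le_rpow_of_nonpos (by positivity) ?_ (by linarith)
        gcongr
        exact (min_le_right _ _).trans hz.1.le
      calc ‖v y‖ * (μ ^ (n-1) * ‖A (μ • y)‖)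
          ≤ M * (a⁻¹ ^ (n-1) * (C * (c ^ (-p) * (1 + ‖y‖) ^ (-p)))) := by
            gcongr
            · exact hM y
            · exact hz.2
            · exact h1.trans (by gcongr)
        _ = _ := by ring
  refine ⟨fun μ => ∫ y, v y * (μ ^ (n-1) * A (μ • y)), ?_, ?_, ?_⟩
  · rw [intervalIntegrable_iff_integrableOn_Ioc_of_le hba]
    exact hprod.integral_prod_right
  · rw [intervalIntegral.integral_of_le hba, ← integral_integral_swap hprod, H_eq hn v A ha, H_eq hn v A hb]
    have hi : ∀ t : ℝ, 0 < t → Integrable (fun y => v y * ∫ μ in (0:ℝ)..t⁻¹, μ ^ (n-1) * A (μ • y)) := by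
      intro t ht
      have h1 : Integrable (fun y : Eu n => R (n-1) A (t⁻¹ • y)) :=
        (hR.int (by linarith)).comp_smul (by positivity)
      have h2 : Integrable (fun y : Eu n => v y * R (n-1) A (t⁻¹ • y)) :=
        h1.bdd_mul (c := M) hv.aestronglyMeasurable (ae_of_all _ hM)
      refine (h2.const_mul (t⁻¹ ^ n)).congr (ae_of_all _ fun y => ?_)
      simp only
      have h2 : ∫ μ in (0:ℝ)..t⁻¹, μ ^ (n-1) * A (μ • y) =
          t⁻¹ * ∫ τ in (0:ℝ)..1, (fun μ => μ ^ (n-1) * A (μ • y)) (t⁻¹ * τ) := by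
        have := intervalIntegral.mul_integral_comp_mul_left (a := (0:ℝ)) (b := 1)
          (f := fun μ => μ ^ (n-1) * A (μ • y)) t⁻¹
        rw [this]; simp
      rw [h2, R]
      simp only [mul_pow, smul_smul, mul_assoc, smul_eq_mul]
      rw [intervalIntegral.integral_const_mul]
      have h3 : t⁻¹ ^ n = t⁻¹ * t⁻¹ ^ (n-1) := by
        rw [← pow_succ', Nat.sub_add_cancel hn]
      rw [h3]
      simp only [mul_comm]
      ring
    rw [← integral_sub (hi a ha) (hi b hb)]
    congr 1; ext y
    have hcy : Continuous (fun μ : ℝ => μ ^ (n-1) * A (μ • y)) := by fun_prop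
    rw [← mul_sub, intervalIntegral.integral_interval_sub_left (hcy.intervalIntegrable _ _)
      (hcy.intervalIntegrable _ _), intervalIntegral.integral_of_le hba, integral_const_mul]
  · intro μ hμ
    have h1 : ∀ y : Eu n, v y * (μ ^ (n-1) * A (μ • y)) =
        (fun z => v (μ⁻¹ • z) * (μ ^ (n-1) * A z)) (μ • y) := by
      intro y
      simp only [smul_smul, inv_mul_cancel₀ hμ.ne', one_smul]
    simp only
    rw [integral_congr_ae (ae_of_all _ h1)]
    rw [Measure.integral_comp_smul_of_nonneg volume (fun z => v (μ⁻¹ • z) * (μ ^ (n-1) * A z)) μ (hR := hμ.le), finrank_euclideanSpace, Fintype.card_fin,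
      smul_eq_mul, H, ← integral_const_mul, ← integral_const_mul]
    congr 1; ext y
    have h3 : (μ ^ n)⁻¹ * μ ^ (n-1) = μ⁻¹ := by
      have : μ ^ n = μ * μ ^ (n-1) := by rw [← pow_succ', Nat.sub_add_cancel hn]
      rw [this]; field_simp
    calc _ = ((μ ^ n)⁻¹ * μ ^ (n-1)) * (v (μ⁻¹ • y) * A y) := by ring
      _ = _ := by rw [h3]

lemma H_zero {n : ℕ} {f v : Eu n → ℝ} (hf : Integrable f) {M : ℝ} (hv : Continuous v) (hM : ∀ x, |v x| ≤ M) :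
    Tendsto (H v f) (𝓝[>] 0) (𝓝 (v 0 * ∫ y, f y)) := by
  rw [← integral_const_mul]
  refine tendsto_integral_filter_of_dominated_convergence (fun y => M * ‖f y‖) ?_ ?_ (hf.norm.const_mul M) ?_
  · refine Eventually.of_forall fun t => ?_
    exact (by fun_prop : Continuous fun y => v (t • y)).aestronglyMeasurable.mul hf.aestronglyMeasurable
  · refine Eventually.of_forall fun t => ae_of_all _ fun y => ?_
    rw [norm_mul]
    exact mul_le_mul_of_nonneg_right (hM _) (norm_nonneg _)
  · refine ae_of_all _ fun y => ?_
    refine Tendsto.mul_const _ ?_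
    have : Continuous fun t : ℝ => v (t • y) := by fun_prop
    have := (this.tendsto 0).mono_left (nhdsWithin_le_nhds (s := Ioi 0))
    simpa using this

lemma H_top {n : ℕ} (hn : 1 ≤ n) {f v : Eu n → ℝ} (hf : Integrable f) {M : ℝ} (hv : Continuous v)
    (hM : ∀ x, |v x| ≤ M) (hsupp : ∀ x, 1 < ‖x‖ → v x = 0) :
    Tendsto (H v f) atTop (𝓝 0) := by
  have : Nonempty (Fin n) := ⟨⟨0, hn⟩⟩
  have h0 : (0:ℝ) = ∫ y : Eu n, (0:ℝ) := by simp
  rw [h0]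
  refine tendsto_integral_filter_of_dominated_convergence (fun y => M * ‖f y‖) ?_ ?_ (hf.norm.const_mul M) ?_
  · refine Eventually.of_forall fun t => ?_
    exact (by fun_prop : Continuous fun y => v (t • y)).aestronglyMeasurable.mul hf.aestronglyMeasurable
  · refine Eventually.of_forall fun t => ae_of_all _ fun y => ?_
    rw [norm_mul]
    exact mul_le_mul_of_nonneg_right (hM _) (norm_nonneg _)
  · have : ∀ᵐ y : Eu n, y ≠ 0 := by
      simp [ae_iff]
    filter_upwards [this] with y hy
    refine tendsto_const_nhds.congr' ?_
    filter_upwards [eventually_gt_atTop (‖y‖⁻¹), eventually_gt_atTop 0] with t ht ht0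
    have hy0 : 0 < ‖y‖ := norm_pos_iff.2 hy
    rw [hsupp, zero_mul]
    rw [norm_smul, Real.norm_of_nonneg ht0.le]
    calc 1 = ‖y‖⁻¹ * ‖y‖ := by field_simp
      _ < t * ‖y‖ := by gcongr

end SHarm

namespace SHarm

section dual
variable {n : ℕ} {s : ℝ} {f : Eu n → ℝ}

lemma prod_base (hn : 1 ≤ n) (hs : s ∈ Ioo (0:ℝ) 1) (hf : Cc f) : Integrable (Function.uncurry fun (x z : Eu n) => K n s z * ‖D2 f x z‖)
    (volume.prod volume) := by
  have hm : AEStronglyMeasurable (Function.uncurry fun (x z : Eu n) => K n s z * ‖D2 f x z‖)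
      (volume.prod volume) :=
    ((K_meas.comp measurable_snd).mul (D2_cont hf.cont).norm.measurable).aestronglyMeasurable
  have hnn : ∀ x z, ‖K n s z * ‖D2 f x z‖‖ = K n s z * ‖D2 f x z‖ := fun x z =>
    Real.norm_of_nonneg (mul_nonneg (K_nonneg z) (norm_nonneg _))
  rw [integrable_prod_iff hm]
  constructor
  · refine ae_of_all _ fun x => ?_
    have := (hf.KD2_int hn hs x).norm
    refine this.congr (ae_of_all _ fun z => ?_)
    simp only [norm_smul, Real.norm_of_nonneg (K_nonneg z), Function.uncurry]
  · obtain ⟨C, h0, hC⟩ := hf.T_bound hn hs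
    refine ((jap_int (n := n) (α := (n:ℝ) + 2 * s) (by linarith [hs.1])).const_mul C).mono'
      hm.norm.integral_prod_right' (ae_of_all _ fun x => ?_)
    simp only [Function.uncurry, hnn]
    rw [Real.norm_of_nonneg]
    · exact hC x
    · exact integral_nonneg fun z => mul_nonneg (K_nonneg z) (norm_nonneg _)

lemma prod_int (hn : 1 ≤ n) (hs : s ∈ Ioo (0:ℝ) 1) (hf : Cc f) {κ : Eu n → ℝ} (hκ : Measurable κ) (hκ0 : ∀ z, 0 ≤ κ z) (hκ1 : ∀ z, κ z ≤ K n s z)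
    {V : Eu n → ℝ} {M : ℝ} (hV : Continuous V) (hM : ∀ x, |V x| ≤ M) :
    Integrable (Function.uncurry fun (x z : Eu n) => V x * (κ z * D2 f x z)) (volume.prod volume) := by
  refine ((prod_base hn hs hf).const_mul M).mono' ?_ ?_
  · exact ((hV.measurable.comp measurable_fst).mul
      ((hκ.comp measurable_snd).mul (D2_cont hf.cont).measurable)).aestronglyMeasurable
  · refine ae_of_all _ fun p => ?_
    obtain ⟨x, z⟩ := p
    simp only [Function.uncurry]
    rw [norm_mul, norm_mul, Real.norm_of_nonneg (hκ0 z)]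
    have hM0 : 0 ≤ M := (abs_nonneg _).trans (hM 0)
    have := hκ0 z
    gcongr
    · exact hM x
    · exact hκ1 z

lemma dual1 (hn : 1 ≤ n) (hs : s ∈ Ioo (0:ℝ) 1) (hf : Cc f) {κ : Eu n → ℝ} (hκ : Measurable κ) (hκ0 : ∀ z, 0 ≤ κ z) (hκ1 : ∀ z, κ z ≤ K n s z)
    {V : Eu n → ℝ} {M : ℝ} (hV : Continuous V) (hM : ∀ x, |V x| ≤ M) :
    ∫ x, V x * ∫ z, κ z * D2 f x z = ∫ z, κ z * ∫ x, V x * D2 f x z := by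
  have := integral_integral_swap (prod_int hn hs hf hκ hκ0 hκ1 hV hM)
  simp_rw [integral_const_mul] at this
  rw [this]
  congr 1; ext z
  rw [← integral_const_mul]
  congr 1; ext x; ring

lemma VD2_int (hf : Cc f) {V : Eu n → ℝ} (hV : Continuous V) (z : Eu n) :
    ∫ x, V x * D2 f x z = ∫ x, f x * D2 V x z := by
  have hc : ∀ g : Eu n → ℝ, Continuous g → Integrable (fun x => g x * f x) := fun g hg =>
    (hg.mul hf.cont).integrable_of_hasCompactSupport hf.hcs.mul_left
  have a0 := hc V hV
  have a1 := hc (fun x => V (x - z)) (by fun_prop)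
  have a2 := hc (fun x => V (x + z)) (by fun_prop)
  have b1 : Integrable (fun x => V x * f (x + z)) := by
    simpa using a1.comp_add_right z
  have b2 : Integrable (fun x => V x * f (x - z)) := by
    simpa using a2.comp_sub_right z
  have e1 : ∫ x, V x * f (x + z) = ∫ x, V (x - z) * f x := by
    have := integral_add_right_eq_self (μ := volume) (fun x => V (x - z) * f x) z
    simpa using this
  have e2 : ∫ x, V x * f (x - z) = ∫ x, V (x + z) * f x := by
    have := integral_sub_right_eq_self (μ := volume) (fun x => V (x + z) * f x) z
    simpa using this
  have l : ∀ x, V x * D2 f x z = 2 * (V x * f x) - V x * f (x + z) - V x * f (x - z) := fun x => by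
    simp only [D2, smul_eq_mul]; ring
  have r : ∀ x, f x * D2 V x z = 2 * (V x * f x) - V (x + z) * f x - V (x - z) * f x := fun x => by
    simp only [D2, smul_eq_mul]; ring
  simp_rw [l, r]
  have c1 : Integrable (fun x => 2 * (V x * f x) - V x * f (x + z)) := (a0.const_mul 2).sub b1
  have c2 : Integrable (fun x => 2 * (V x * f x) - V (x + z) * f x) := (a0.const_mul 2).sub a2
  rw [integral_sub c1 b2, integral_sub (a0.const_mul 2) b1,
    integral_sub c2 a1, integral_sub (a0.const_mul 2) a2, e1, e2]
  ring

/-- Truncated kernel. -/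
noncomputable def Kt (n : ℕ) (s ε : ℝ) : Eu n → ℝ := indicator {z | ε < ‖z‖} (K n s)

lemma mS (ε : ℝ) : MeasurableSet {z : Eu n | ε < ‖z‖} := measurableSet_lt measurable_const measurable_norm

lemma Kt_meas (ε : ℝ) : Measurable (Kt n s ε) := K_meas.indicator (mS ε)

lemma Kt_nonneg (ε : ℝ) (z : Eu n) : 0 ≤ Kt n s ε z := indicator_nonneg (fun z _ => K_nonneg z) z

lemma Kt_le (ε : ℝ) (z : Eu n) : Kt n s ε z ≤ K n s z := indicator_le_self' (fun z _ => K_nonneg z) z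

lemma Kt_int (hn : 1 ≤ n) (hs : s ∈ Ioo (0:ℝ) 1) {ε : ℝ} (hε : 0 < ε) : Integrable (Kt n s ε) :=
  (integrable_indicator_iff (mS ε)).2 (K_int_out hn hs hε)

lemma Kt_neg (ε : ℝ) (z : Eu n) : Kt n s ε (-z) = Kt n s ε z := by
  simp [Kt, indicator, K_neg]

lemma dual2 (hn : 1 ≤ n) (hs : s ∈ Ioo (0:ℝ) 1) (hf : Cc f) {ε : ℝ} (hε : 0 < ε) {V : Eu n → ℝ} {M : ℝ} (hV : Continuous V) (hM : ∀ x, |V x| ≤ M) :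
    ∫ x, V x * ∫ z, Kt n s ε z * D2 f x z = ∫ x, f x * ∫ z, Kt n s ε z * D2 V x z := by
  rw [dual1 hn hs hf (Kt_meas ε) (Kt_nonneg ε) (Kt_le ε) hV hM]
  simp_rw [VD2_int hf hV]
  have hi : Integrable (Function.uncurry fun (x z : Eu n) => f x * (Kt n s ε z * D2 V x z))
      (volume.prod volume) := by
    have hfi : Integrable (fun x => ‖f x‖) := (hf.cont.integrable_of_hasCompactSupport hf.hcs).norm
    have hg := (hfi.mul_prod (Kt_int hn hs hε)).const_mul (4 * M)
    refine hg.mono' ?_ ?_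
    · exact ((hf.cont.measurable.comp measurable_fst).mul
        (((Kt_meas ε).comp measurable_snd).mul (D2_cont hV).measurable)).aestronglyMeasurable
    · refine ae_of_all _ fun p => ?_
      obtain ⟨x, z⟩ := p
      simp only [Function.uncurry]
      rw [norm_mul, norm_mul, Real.norm_of_nonneg (Kt_nonneg ε z)]
      have h4 : ‖D2 V x z‖ ≤ 4 * M := by
        have h1 := abs_le.1 (hM x); have h2 := abs_le.1 (hM (x+z)); have h3 := abs_le.1 (hM (x-z))
        simp only [D2, smul_eq_mul, Real.norm_eq_abs]
        rw [abs_le]; constructor <;> linarith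
      calc ‖f x‖ * (Kt n s ε z * ‖D2 V x z‖) ≤ ‖f x‖ * (Kt n s ε z * (4 * M)) := by
            have := Kt_nonneg (s := s) ε z
            gcongr
        _ = _ := by ring
  have := integral_integral_swap hi
  simp_rw [integral_const_mul] at this
  rw [this]
  congr 1; ext z
  rw [← integral_const_mul]
  congr 1; ext x; ring

lemma trunc_tendsto (hn : 1 ≤ n) (hs : s ∈ Ioo (0:ℝ) 1) (hf : Cc f) {V : Eu n → ℝ} {M : ℝ} (hV : Continuous V) (hM : ∀ x, |V x| ≤ M) :
    Tendsto (fun ε => ∫ x, V x * ∫ z, Kt n s ε z * D2 f x z) (𝓝[>] 0) (𝓝 (∫ x, V x * T s f x)) := by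
  obtain ⟨C, h0, hC⟩ := hf.T_bound hn hs
  have hM0 : 0 ≤ M := (abs_nonneg _).trans (hM 0)
  have hKD : ∀ x, Integrable (fun z => K n s z * ‖D2 f x z‖) := fun x => by
    have := (hf.KD2_int hn hs x).norm
    refine this.congr (ae_of_all _ fun z => ?_)
    simp only [norm_smul, Real.norm_of_nonneg (K_nonneg z)]
  have hb : ∀ ε x z, ‖Kt n s ε z * D2 f x z‖ ≤ K n s z * ‖D2 f x z‖ := fun ε x z => by
    rw [norm_mul, Real.norm_of_nonneg (Kt_nonneg ε z)]
    gcongr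
    exact Kt_le ε z
  refine tendsto_integral_filter_of_dominated_convergence
    (fun x => M * (C * (1 + ‖x‖) ^ (-((n:ℝ) + 2 * s)))) ?_ ?_
    (((jap_int (n := n) (α := (n:ℝ) + 2 * s) (by linarith [hs.1])).const_mul C).const_mul M) ?_
  · refine Eventually.of_forall fun ε => ?_
    have := (prod_int hn hs hf (Kt_meas ε) (Kt_nonneg ε) (Kt_le ε) hV hM).integral_prod_left.aestronglyMeasurable
    simpa [Function.uncurry, integral_const_mul] using this
  · refine Eventually.of_forall fun ε => ae_of_all _ fun x => ?_
    rw [norm_mul]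
    gcongr
    · exact hM x
    · exact (norm_integral_le_of_norm_le (hKD x) (ae_of_all _ fun z => hb ε x z)).trans (hC x)
  · refine ae_of_all _ fun x => Tendsto.const_mul _ ?_
    refine tendsto_integral_filter_of_dominated_convergence (fun z => K n s z * ‖D2 f x z‖) ?_ ?_ (hKD x) ?_
    · refine Eventually.of_forall fun ε => ?_
      exact (((Kt_meas ε)).mul (D2_cont' hf.cont x).measurable).aestronglyMeasurable
    · exact Eventually.of_forall fun ε => ae_of_all _ fun z => hb ε x z
    · refine ae_of_all _ fun z => ?_
      refine tendsto_const_nhds.congr' ?_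
      rcases eq_or_ne z 0 with rfl | hz
      · refine Eventually.of_forall fun ε => ?_
        simp [D2, two_mul]
      · have hz' : 0 < ‖z‖ := norm_pos_iff.2 hz
        have : Iio ‖z‖ ∈ 𝓝[>] (0:ℝ) := mem_nhdsWithin_of_mem_nhds (Iio_mem_nhds hz')
        filter_upwards [this] with ε hε
        have : Kt n s ε z = K n s z := indicator_of_mem (s := {z : Eu n | ε < ‖z‖}) hε _
        rw [this, smul_eq_mul]

end dual

lemma Kt_D2_eq {n : ℕ} (hn : 1 ≤ n) {s : ℝ} (hs : s ∈ Ioo (0:ℝ) 1) {V : Eu n → ℝ} {M : ℝ}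
    (hV : Continuous V) (hM : ∀ x, |V x| ≤ M) {ε : ℝ} (hε : 0 < ε) (x : Eu n) :
    Integrable (fun z => Kt n s ε z * (V x - V (x + z))) ∧
    ∫ z, Kt n s ε z * D2 V x z = 2 * ∫ z, Kt n s ε z * (V x - V (x + z)) := by
  have hb : ∀ z, |V x - V (x + z)| ≤ 2 * M := fun z => by
    have h1 := abs_le.1 (hM x); have h2 := abs_le.1 (hM (x+z))
    rw [abs_le]; constructor <;> linarith
  have hi : Integrable (fun z => Kt n s ε z * (V x - V (x + z))) :=
    (Kt_int hn hs hε).mul_bdd (c := 2 * M) (by fun_prop : Continuous fun z => V x - V (x + z)).aestronglyMeasurable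
      (ae_of_all _ hb)
  refine ⟨hi, ?_⟩
  have hi2 : Integrable (fun z => Kt n s ε z * (V x - V (x - z))) := by
    refine hi.comp_neg.congr (ae_of_all _ fun z => ?_)
    simp only [Kt_neg, ← sub_eq_add_neg]
  have e : ∫ z, Kt n s ε z * (V x - V (x - z)) = ∫ z, Kt n s ε z * (V x - V (x + z)) := by
    rw [← integral_neg_eq_self]
    congr 1; ext z
    simp only [Kt_neg, sub_neg_eq_add]
  calc ∫ z, Kt n s ε z * D2 V x z = ∫ z, (Kt n s ε z * (V x - V (x + z)) + Kt n s ε z * (V x - V (x - z))) := by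
        congr 1; ext z; simp only [D2, smul_eq_mul]; ring
    _ = _ := by rw [integral_add hi hi2, e]; ring

/-- Sup-convolution. -/
lemma supconv {n : ℕ} {v : Eu n → ℝ} {M : ℝ} (hv : Continuous v) (hM : ∀ x, |v x| ≤ M) {N : ℝ} (hN : 0 < N) :
    ∃ (V : Eu n → ℝ) (q : Eu n → Eu n), Continuous V ∧ (∀ x, |V x| ≤ M) ∧ (∀ x, v x ≤ V x) ∧
      (∀ x, V x ≤ v (q x)) ∧ (∀ x, N * ‖x - q x‖ ^ 2 ≤ 2 * M) ∧
      (∀ x z, V x - V (x + z) ≤ v (q x) - v (q x + z)) ∧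
      (∀ x z, D2 V x z ≤ 2 * N * ‖z‖ ^ 2) := by
  have hM0 : 0 ≤ M := (abs_nonneg _).trans (hM 0)
  have hex : ∀ x, ∃ y, ∀ y', v y' - N * ‖x - y'‖ ^ 2 ≤ v y - N * ‖x - y‖ ^ 2 := by
    intro x
    obtain ⟨y, hy, hmax⟩ := (isCompact_closedBall x (√(2 * M / N))).exists_isMaxOn
      ⟨x, mem_closedBall_self (by positivity)⟩
      (f := fun y => v y - N * ‖x - y‖ ^ 2) (by fun_prop)
    refine ⟨y, fun y' => ?_⟩
    by_cases h : y' ∈ closedBall x (√(2 * M / N))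
    · exact hmax h
    · have hx := hmax (mem_closedBall_self (x := x) (by positivity : 0 ≤ √(2 * M / N)))
      simp only [mem_ofPred_eq, sub_self, norm_zero] at hx
      rw [mem_closedBall, not_le, dist_comm, dist_eq_norm] at h
      have h' : 2 * M / N < ‖x - y'‖ ^ 2 := (Real.sqrt_lt' ((Real.sqrt_nonneg _).trans_lt h)).1 h
      rw [div_lt_iff₀ hN] at h'
      have h1 := abs_le.1 (hM x); have h2 := abs_le.1 (hM y')
      linarith
  choose q hq using hex
  set V : Eu n → ℝ := fun x => v (q x) - N * ‖x - q x‖ ^ 2 with hVdef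
  have hVle : ∀ x y, v y - N * ‖x - y‖ ^ 2 ≤ V x := hq
  have h1 : ∀ x, v x ≤ V x := fun x => by simpa using hVle x x
  have h2 : ∀ x, V x ≤ v (q x) := fun x => by
    have : 0 ≤ N * ‖x - q x‖ ^ 2 := by positivity
    simp only [hVdef]; linarith
  have h3 : ∀ x, N * ‖x - q x‖ ^ 2 ≤ 2 * M := fun x => by
    have a := h1 x
    simp only [hVdef] at a
    have b := abs_le.1 (hM x); have c := abs_le.1 (hM (q x))
    linarith
  have h5 : ∀ x z, V x - V (x + z) ≤ N * (2 * inner ℝ (x - q x) z + ‖z‖ ^ 2) := by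
    intro x z
    have a := hVle (x + z) (q x)
    have : x + z - q x = (x - q x) + z := by abel
    rw [this, norm_add_sq_real] at a
    simp only [hVdef] at a ⊢
    linarith
  refine ⟨V, q, ?_, ?_, h1, h2, h3, ?_, ?_⟩
  · -- continuity
    set L := √(2 * M / N) with hL
    have hq' : ∀ x, ‖x - q x‖ ≤ L := fun x => by
      rw [hL]
      refine Real.le_sqrt_of_sq_le ?_
      rw [le_div_iff₀ hN]; linarith [h3 x]
    have hle : ∀ x y, V x - V y ≤ N * (2 * L * ‖y - x‖ + ‖y - x‖ ^ 2) := fun x y => by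
      have a := h5 x (y - x)
      rw [add_sub_cancel] at a
      have b := real_inner_le_norm (x - q x) (y - x)
      have c : ‖x - q x‖ * ‖y - x‖ ≤ L * ‖y - x‖ := by gcongr; exact hq' x
      refine a.trans (mul_le_mul_of_nonneg_left ?_ hN.le)
      linarith
    rw [continuous_iff_continuousAt]
    intro x
    rw [ContinuousAt, tendsto_iff_dist_tendsto_zero]
    have hlim : Tendsto (fun y => N * (2 * L * ‖y - x‖ + ‖y - x‖ ^ 2)) (𝓝 x) (𝓝 0) := by
      have : Continuous (fun y => N * (2 * L * ‖y - x‖ + ‖y - x‖ ^ 2)) := by fun_prop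
      have := this.tendsto x
      simpa using this
    refine squeeze_zero (fun _ => dist_nonneg) (fun y => ?_) hlim
    rw [Real.dist_eq, abs_le]
    have a := hle x y
    have b := hle y x
    rw [norm_sub_rev x y] at b
    constructor <;> linarith
  · intro x
    have a := h1 x; have b := h2 x
    have c := abs_le.1 (hM x); have d := abs_le.1 (hM (q x))
    rw [abs_le]; constructor <;> linarith
  · intro x z
    have a := hVle (x + z) (q x + z)
    rw [add_sub_add_right_eq_sub] at a
    simp only [hVdef] at a ⊢
    linarith
  · intro x z
    have a := h5 x z
    have b := h5 x (-z)
    rw [norm_neg, inner_neg_right, ← sub_eq_add_neg] at b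
    simp only [D2, smul_eq_mul]
    linarith

end SHarm

namespace SHarm

/-- Pointwise `s`-harmonicity at `x` in terms of the truncated kernel. -/
def SH {n : ℕ} (s : ℝ) (v : Eu n → ℝ) (x : Eu n) : Prop :=
  Tendsto (fun ε => ∫ z, Kt n s ε z * (v x - v (x + z))) (𝓝[>] 0) (𝓝 0)

lemma weak_V {n : ℕ} (hn : 1 ≤ n) {s : ℝ} (hs : s ∈ Ioo (0:ℝ) 1) {f : Eu n → ℝ} (hf : Cc f)
    (hf0 : ∀ x, 0 ≤ f x) {v : Eu n → ℝ} {M : ℝ} (hM : ∀ x, |v x| ≤ M)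
    (hv : Continuous v) (hh : ∀ x ∈ ball (0 : Eu n) 2, SH s v x) {N : ℝ} (hN : 0 < N) (hN2 : 2 * M < N)
    {V : Eu n → ℝ} {q : Eu n → Eu n} (hV : Continuous V) (hVM : ∀ x, |V x| ≤ M)
    (hq : ∀ x, N * ‖x - q x‖ ^ 2 ≤ 2 * M)
    (hVq : ∀ x z, V x - V (x + z) ≤ v (q x) - v (q x + z))
    (hD : ∀ x z, D2 V x z ≤ 2 * N * ‖z‖ ^ 2) :
    ∫ x, V x * T s f x ≤ 0 := by
  have hM0 : 0 ≤ M := (abs_nonneg _).trans (hM 0)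
  have hfi : Integrable f := hf.cont.integrable_of_hasCompactSupport hf.hcs
  set G : ℝ → Eu n → ℝ := fun ε x => ∫ z, Kt n s ε z * D2 V x z with hG
  have hD4 : ∀ x z, |D2 V x z| ≤ 4 * M := fun x z => by
    have h1 := abs_le.1 (hVM x); have h2 := abs_le.1 (hVM (x+z)); have h3 := abs_le.1 (hVM (x-z))
    simp only [D2, smul_eq_mul]
    rw [abs_le]; constructor <;> linarith
  have hGm : ∀ ε, StronglyMeasurable (G ε) := fun ε => by
    have : StronglyMeasurable (fun p : Eu n × Eu n => Kt n s ε p.2 * D2 V p.1 p.2) :=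
      (((Kt_meas ε).comp measurable_snd).mul (D2_cont hV).measurable).stronglyMeasurable
    exact this.integral_prod_right
  have hKi : ∀ ε, 0 < ε → ∀ x, Integrable (fun z => Kt n s ε z * D2 V x z) := fun ε hε x =>
    (Kt_int hn hs hε).mul_bdd (c := 4 * M) (D2_cont' hV x).aestronglyMeasurable
      (ae_of_all _ fun z => hD4 x z)
  have hGb : ∀ ε, 0 < ε → ∀ x, |G ε x| ≤ ∫ z, Kt n s ε z * (4 * M) := fun ε hε x => by
    rw [← Real.norm_eq_abs]
    refine norm_integral_le_of_norm_le ((Kt_int hn hs hε).mul_const _) (ae_of_all _ fun z => ?_)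
    rw [norm_mul, Real.norm_of_nonneg (Kt_nonneg ε z)]
    exact mul_le_mul_of_nonneg_left (hD4 x z) (Kt_nonneg ε z)
  set P : ℝ := max (2 * N) (4 * M) with hP
  set C : ℝ := ∫ z, P * (K n s z * min 1 (‖z‖ ^ 2)) with hC
  have hP0 : 0 ≤ P := le_max_of_le_right (by linarith)
  have hGu : ∀ ε, 0 < ε → ∀ x, G ε x ≤ C := fun ε hε x => by
    refine integral_mono (hKi ε hε x) ((K_int hn hs).const_mul P) fun z => ?_
    have h1 : D2 V x z ≤ P * min 1 (‖z‖ ^ 2) := by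
      rcases min_choice 1 (‖z‖ ^ 2) with h | h <;> rw [h]
      · have := le_abs_self (D2 V x z)
        linarith [hD4 x z, le_max_right (2 * N) (4 * M)]
      · refine (hD x z).trans ?_
        gcongr
        exact le_max_left _ _
    have h0 : 0 ≤ P * min 1 (‖z‖ ^ 2) := by positivity
    calc Kt n s ε z * D2 V x z ≤ Kt n s ε z * (P * min 1 (‖z‖ ^ 2)) :=
          mul_le_mul_of_nonneg_left h1 (Kt_nonneg ε z)
      _ ≤ K n s z * (P * min 1 (‖z‖ ^ 2)) := mul_le_mul_of_nonneg_right (Kt_le ε z) h0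
      _ = _ := by ring
  have hC0 : 0 ≤ C := integral_nonneg fun z => by
    have := K_nonneg (s := s) z
    positivity
  have hlim : Tendsto (fun ε => ∫ x, f x * max (G ε x) 0) (𝓝[>] 0) (𝓝 (∫ x : Eu n, (0:ℝ))) := by
    refine tendsto_integral_filter_of_dominated_convergence (fun x => f x * C) ?_ ?_ (hfi.mul_const C) ?_
    · exact Eventually.of_forall fun ε =>
        hf.cont.aestronglyMeasurable.mul ((hGm ε).measurable.max measurable_const).aestronglyMeasurable
    · filter_upwards [self_mem_nhdsWithin] with ε hε
      refine ae_of_all _ fun x => ?_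
      rw [Real.norm_of_nonneg (mul_nonneg (hf0 x) (le_max_right _ _))]
      exact mul_le_mul_of_nonneg_left (max_le (hGu ε hε x) hC0) (hf0 x)
    · refine ae_of_all _ fun x => ?_
      by_cases hx : 1 < ‖x‖
      · simp [hf.2 x hx]
      · have hqx : q x ∈ ball (0 : Eu n) 2 := by
          rw [mem_ball_zero_iff]
          have h1 : ‖x - q x‖ < 1 := by
            by_contra hc
            push Not at hc
            have : 1 ≤ ‖x - q x‖ ^ 2 := one_le_pow₀ hc
            nlinarith [hq x]
          have h2 : ‖q x‖ ≤ ‖x‖ + ‖x - q x‖ := norm_le_insert x (q x)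
          linarith
        have hl := hh (q x) hqx
        have hl2 : Tendsto (fun ε => max (2 * ∫ z, Kt n s ε z * (v (q x) - v (q x + z))) 0) (𝓝[>] 0) (𝓝 0) := by
          have := (hl.const_mul 2).max (tendsto_const_nhds (x := (0:ℝ)))
          simpa using this
        have hmx : Tendsto (fun ε => max (G ε x) 0) (𝓝[>] 0) (𝓝 0) := by
          refine tendsto_of_tendsto_of_tendsto_of_le_of_le' tendsto_const_nhds hl2
            (Eventually.of_forall fun ε => le_max_right _ _) ?_
          filter_upwards [self_mem_nhdsWithin] with ε hε
          refine max_le_max ?_ le_rfl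
          obtain ⟨i1, e1⟩ := Kt_D2_eq hn hs hV hVM hε x
          obtain ⟨i2, -⟩ := Kt_D2_eq hn hs hv hM hε (q x)
          simp only [hG]
          rw [e1]
          refine mul_le_mul_of_nonneg_left (integral_mono i1 i2 fun z => ?_) zero_le_two
          exact mul_le_mul_of_nonneg_left (hVq x z) (Kt_nonneg ε z)
        simpa using hmx.const_mul (f x)
  rw [integral_zero] at hlim
  refine le_of_tendsto_of_tendsto (trunc_tendsto hn hs hf hV hVM) hlim ?_
  filter_upwards [self_mem_nhdsWithin] with ε hε
  rw [dual2 hn hs hf hε hV hVM]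
  refine integral_mono ?_ ?_ fun x => mul_le_mul_of_nonneg_left (le_max_left _ _) (hf0 x)
  · exact hfi.mul_bdd (hGm ε).aestronglyMeasurable (ae_of_all _ (hGb ε hε))
  · refine hfi.mul_bdd (c := C) ((hGm ε).measurable.max measurable_const).aestronglyMeasurable
      (ae_of_all _ fun x => ?_)
    rw [Real.norm_of_nonneg (le_max_right _ _)]
    exact max_le (hGu ε hε x) hC0

lemma weak_le {n : ℕ} (hn : 1 ≤ n) {s : ℝ} (hs : s ∈ Ioo (0:ℝ) 1) {f : Eu n → ℝ} (hf : Cc f)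
    (hf0 : ∀ x, 0 ≤ f x) {v : Eu n → ℝ} {M : ℝ} (hM : ∀ x, |v x| ≤ M)
    (hv : Continuous v) (hh : ∀ x ∈ ball (0 : Eu n) 2, SH s v x) :
    ∫ x, v x * T s f x ≤ 0 := by
  have hM0 : 0 ≤ M := (abs_nonneg _).trans (hM 0)
  have hN : ∀ k : ℕ, 0 < 2 * M + 1 + (k:ℝ) := fun k => by positivity
  choose V q hV hVM hvV hVv hq hVq hD using fun k : ℕ => supconv hv hM (hN k)
  have hle : ∀ k, ∫ x, V k x * T s f x ≤ 0 := fun k =>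
    weak_V hn hs hf hf0 hM hv hh (hN k) (by have : (0:ℝ) ≤ k := k.cast_nonneg; linarith) (hV k) (hVM k) (hq k) (hVq k) (hD k)
  have hA := hf.T_dec hn hs
  have hAi : Integrable (T s f) := hA.int (by linarith [hs.1])
  have hlim : Tendsto (fun k => ∫ x, V k x * T s f x) atTop (𝓝 (∫ x, v x * T s f x)) := by
    refine tendsto_integral_of_dominated_convergence (fun x => M * ‖T s f x‖) ?_ (hAi.norm.const_mul M) ?_ ?_
    · exact fun k => ((hV k).mul hA.cont).aestronglyMeasurable
    · refine fun k => ae_of_all _ fun x => ?_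
      rw [norm_mul]
      exact mul_le_mul_of_nonneg_right (hVM k x) (norm_nonneg _)
    · refine ae_of_all _ fun x => Tendsto.mul_const _ ?_
      have hqx : Tendsto (fun k => q k x) atTop (𝓝 x) := by
        rw [tendsto_iff_norm_sub_tendsto_zero]
        have h1 : Tendsto (fun k : ℕ => √(2 * M / (2 * M + 1 + (k:ℝ)))) atTop (𝓝 0) := by
          have h2 : Tendsto (fun k : ℕ => 2 * M / (2 * M + 1 + (k:ℝ))) atTop (𝓝 0) :=
            tendsto_const_nhds.div_atTop (tendsto_atTop_add_const_left _ _ tendsto_natCast_atTop_atTop)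
          simpa using h2.sqrt
        refine squeeze_zero (fun _ => norm_nonneg _) (fun k => ?_) h1
        refine Real.le_sqrt_of_sq_le ?_
        rw [le_div_iff₀ (hN k), norm_sub_rev]
        linarith [hq k x]
      exact tendsto_of_tendsto_of_tendsto_of_le_of_le tendsto_const_nhds
        ((hv.tendsto x).comp hqx) (fun k => hvV k x) (fun k => hVv k x)
  exact le_of_tendsto' hlim hle

lemma SH.neg {n : ℕ} {s : ℝ} {v : Eu n → ℝ} {x : Eu n} (h : SH s v x) : SH s (fun y => - v y) x := by
  have := Filter.Tendsto.neg h
  rw [neg_zero] at this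
  refine this.congr fun ε => ?_
  rw [← integral_neg]
  congr 1; ext z; ring

lemma weak {n : ℕ} (hn : 1 ≤ n) {s : ℝ} (hs : s ∈ Ioo (0:ℝ) 1) {f : Eu n → ℝ} (hf : Cc f)
    (hf0 : ∀ x, 0 ≤ f x) {v : Eu n → ℝ} {M : ℝ} (hM : ∀ x, |v x| ≤ M)
    (hv : Continuous v) (hh : ∀ x ∈ ball (0 : Eu n) 2, SH s v x) :
    ∫ x, v x * T s f x = 0 := by
  refine le_antisymm (weak_le hn hs hf hf0 hM hv hh) ?_
  have := weak_le hn hs hf hf0 (v := fun y => - v y) (M := M) (by simpa using hM) hv.neg (fun x hx => (hh x hx).neg)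
  simp only [neg_mul, integral_neg] at this
  linarith

end SHarm

namespace SHarm

/-- The radial bump. -/
noncomputable def Phi {n : ℕ} (x : Eu n) : ℝ := expNegInvGlue (1 - ‖x‖ ^ 2)

variable {n : ℕ}

lemma Phi_Cc : Cc (Phi (n := n)) := by
  refine ⟨?_, fun x hx => ?_⟩
  · exact expNegInvGlue.contDiff.comp (contDiff_const.sub (contDiff_norm_sq ℝ))
  · exact expNegInvGlue.zero_of_nonpos (by nlinarith)

lemma Phi_zero' {x : Eu n} (hx : 1 ≤ ‖x‖) : Phi x = 0 :=
  expNegInvGlue.zero_of_nonpos (by nlinarith)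

lemma Phi_nonneg (x : Eu n) : 0 ≤ Phi x := expNegInvGlue.nonneg _

lemma Phi_pos : 0 < Phi (0 : Eu n) := expNegInvGlue.pos_of_pos (by simp)

lemma Phi_anti {x y : Eu n} (h : ‖x‖ ≤ ‖y‖) : Phi y ≤ Phi x := by
  refine expNegInvGlue.monotone ?_
  have := norm_nonneg x
  gcongr

lemma Phi_rad {x y : Eu n} (h : ‖x‖ = ‖y‖) : Phi x = Phi y := by simp [Phi, h]

lemma Phi_cont : Continuous (Phi (n := n)) := Phi_Cc.cont

lemma Phi_bdd (x : Eu n) : |Phi x| ≤ Phi (0 : Eu n) := by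
  rw [abs_of_nonneg (Phi_nonneg x)]
  exact Phi_anti (by simp)

lemma A_rad {s : ℝ} (x y : Eu n) (h : ‖x‖ = ‖y‖) : T s Phi x = T s Phi y := by
  set L := (ℝ ∙ (x - y))ᗮ.reflection with hL
  have hLx : L x = y := Submodule.reflection_sub h
  rw [← hLx]
  unfold T
  symm
  rw [← L.measurePreserving.integral_comp L.toHomeomorph.measurableEmbedding]
  congr 1; ext z
  have e : ∀ w, Phi (L w) = Phi w := fun w => Phi_rad (L.norm_map w)
  simp only [D2, ← map_add, ← map_sub, e, K, L.norm_map]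

lemma A_int (hn : 1 ≤ n) {s : ℝ} (hs : s ∈ Ioo (0:ℝ) 1) : ∫ x : Eu n, T s Phi x = 0 := by
  have := dual1 hn hs (Phi_Cc (n := n)) K_meas K_nonneg (fun _ => le_rfl) (V := fun _ => 1) (M := 1)
    continuous_const (by simp)
  have h2 : ∀ z : Eu n, ∫ x : Eu n, (1:ℝ) * D2 Phi x z = 0 := fun z => by
    have := VD2_int (Phi_Cc (n := n)) (V := fun _ => 1) continuous_const z
    rw [this]
    simp only [D2, smul_eq_mul]
    norm_num
  simp_rw [h2] at this
  simpa [T] using this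

/-- The decaying kernel. -/
noncomputable def rho (n : ℕ) (s : ℝ) : Eu n → ℝ := R (n-1) (T s Phi)

lemma A_dec (hn : 1 ≤ n) {s : ℝ} (hs : s ∈ Ioo (0:ℝ) 1) : Dec ((n:ℝ) + 2 * s) (T s (Phi (n := n))) :=
  Phi_Cc.T_dec hn hs

lemma rho_dec (hn : 1 ≤ n) {s : ℝ} (hs : s ∈ Ioo (0:ℝ) 1) : Dec ((n:ℝ) + s) (rho n s) :=
  R_dec hn hs (A_dec hn hs) A_rad (A_int hn hs)

lemma rho_even {s : ℝ} (x : Eu n) : rho n s (-x) = rho n s x := by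
  unfold rho R
  congr 1; ext t
  rw [A_rad (t • -x) (t • x) (by simp)]

lemma W_eq {V f : Eu n → ℝ} (hf : Cc f) (hV : Continuous V) (z : Eu n) :
    Integrable (fun x => (V x - V (x + z)) * (f x - f (x + z))) ∧
    ∫ x, V x * D2 f x z = ∫ x, (V x - V (x + z)) * (f x - f (x + z)) := by
  have hc : ∀ g : Eu n → ℝ, Continuous g → Integrable (fun x => g x * f x) := fun g hg =>
    (hg.mul hf.cont).integrable_of_hasCompactSupport hf.hcs.mul_left
  have a0 := hc V hV
  have a1 := hc (fun x => V (x - z)) (by fun_prop)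
  have a2 := hc (fun x => V (x + z)) (by fun_prop)
  have b1 : Integrable (fun x => V x * f (x + z)) := by
    simpa using a1.comp_add_right z
  have b2 : Integrable (fun x => V x * f (x - z)) := by
    simpa using a2.comp_sub_right z
  have b3 : Integrable (fun x => V (x + z) * f (x + z)) := a0.comp_add_right z
  have e2 : ∫ x, V x * f (x - z) = ∫ x, V (x + z) * f x := by
    have := integral_sub_right_eq_self (μ := volume) (fun x => V (x + z) * f x) z
    simpa using this
  have e3 : ∫ x, V (x + z) * f (x + z) = ∫ x, V x * f x :=
    integral_add_right_eq_self (μ := volume) (fun x => V x * f x) z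
  have l : ∀ x, V x * D2 f x z = 2 * (V x * f x) - V x * f (x + z) - V x * f (x - z) := fun x => by
    simp only [D2, smul_eq_mul]; ring
  have r : ∀ x, (V x - V (x + z)) * (f x - f (x + z)) =
      (V x * f x - V x * f (x + z)) - (V (x + z) * f x - V (x + z) * f (x + z)) := fun x => by ring
  have c1 : Integrable (fun x => 2 * (V x * f x) - V x * f (x + z)) := (a0.const_mul 2).sub b1
  have c2 : Integrable (fun x => V x * f x - V x * f (x + z)) := a0.sub b1
  have c3 : Integrable (fun x => V (x + z) * f x - V (x + z) * f (x + z)) := a2.sub b3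
  simp_rw [l, r]
  refine ⟨c2.sub c3, ?_⟩
  rw [integral_sub c1 b2, integral_sub (a0.const_mul 2) b1, integral_sub c2 c3, integral_sub a0 b1,
    integral_sub a2 b3, e2, e3, integral_const_mul]
  ring

lemma HA_pos (hn : 1 ≤ n) {s : ℝ} (hs : s ∈ Ioo (0:ℝ) 1) {μ : ℝ} (hμ : 0 < μ) :
    0 < H (Phi (n := n)) (T s Phi) μ := by
  set V : Eu n → ℝ := fun y => Phi (μ • y) with hVd
  have hV : Continuous V := Phi_cont.comp (continuous_const_smul μ)
  have hVM : ∀ x, |V x| ≤ Phi (0 : Eu n) := fun x => Phi_bdd _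
  have e := dual1 hn hs (Phi_Cc (n := n)) K_meas K_nonneg (fun _ => le_rfl) hV hVM
  have hi := (prod_int hn hs (Phi_Cc (n := n)) K_meas K_nonneg (fun _ => le_rfl) hV hVM).integral_prod_right
  have e0 : H (Phi (n := n)) (T s Phi) μ = ∫ z, K n s z * ∫ x, V x * D2 Phi x z := e
  have hi' : Integrable (fun z => K n s z * ∫ x, V x * D2 Phi x z) := by
    refine hi.congr (ae_of_all _ fun z => ?_)
    simp only [Function.uncurry]
    rw [← integral_const_mul]
    congr 1; ext x; ring
  have hpt : ∀ x z : Eu n, 0 ≤ (V x - V (x + z)) * (Phi x - Phi (x + z)) := fun x z => by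
    rcases le_total ‖x‖ ‖x + z‖ with h | h
    · have h1 := Phi_anti h
      have h2 : V (x + z) ≤ V x := Phi_anti (by rw [norm_smul, norm_smul]; gcongr)
      exact mul_nonneg (by linarith) (by linarith)
    · have h1 := Phi_anti h
      have h2 : V x ≤ V (x + z) := Phi_anti (by rw [norm_smul, norm_smul]; gcongr)
      exact mul_nonneg_of_nonpos_of_nonpos (by linarith) (by linarith)
  have hW0 : ∀ z, 0 ≤ ∫ x, V x * D2 Phi x z := fun z => by
    rw [(W_eq Phi_Cc hV z).2]
    exact integral_nonneg fun x => hpt x z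
  have hWp : ∀ z, 1 + μ⁻¹ < ‖z‖ → 0 < ∫ x, V x * D2 Phi x z := fun z hz => by
    have hμ' : 0 < μ⁻¹ := inv_pos.2 hμ
    rw [(W_eq Phi_Cc hV z).2, integral_pos_iff_support_of_nonneg (fun x => hpt x z) (W_eq Phi_Cc hV z).1]
    have hcont : Continuous (fun x => (V x - V (x + z)) * (Phi x - Phi (x + z))) := by
      have := Phi_cont (n := n)
      fun_prop
    refine hcont.isOpen_support.measure_pos _ ⟨0, ?_⟩
    rw [Function.mem_support]
    have h1 : Phi z = 0 := Phi_zero' (by linarith)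
    have h2 : V z = 0 := Phi_zero' (by
      rw [norm_smul, Real.norm_of_nonneg hμ.le]
      have : μ * μ⁻¹ = 1 := mul_inv_cancel₀ hμ.ne'
      nlinarith)
    have h3 : V 0 = Phi (0 : Eu n) := by simp [hVd]
    simp only [zero_add, h1, h2, h3, sub_zero]
    have := Phi_pos (n := n)
    positivity
  rw [e0, integral_pos_iff_support_of_nonneg (fun z => mul_nonneg (K_nonneg z) (hW0 z)) hi']
  have hop : IsOpen {z : Eu n | 1 + μ⁻¹ < ‖z‖} := isOpen_lt continuous_const continuous_norm
  have hne : {z : Eu n | 1 + μ⁻¹ < ‖z‖}.Nonempty := by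
    refine ⟨EuclideanSpace.single ⟨0, hn⟩ (2 + μ⁻¹), ?_⟩
    have hμ' : 0 < μ⁻¹ := inv_pos.2 hμ
    simp only [mem_ofPred_eq, PiLp.norm_single]
    rw [Real.norm_of_nonneg (by positivity)]
    linarith
  refine (hop.measure_pos volume hne).trans_le (measure_mono fun z hz => ?_)
  rw [Function.mem_support]
  have hμ' : 0 < μ⁻¹ := inv_pos.2 hμ
  have hz' : 1 + μ⁻¹ < ‖z‖ := hz
  have : 0 < K n s z := Real.rpow_pos_of_pos (by linarith) _
  exact (mul_pos this (hWp z hz')).ne'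

lemma rho_pos (hn : 1 ≤ n) {s : ℝ} (hs : s ∈ Ioo (0:ℝ) 1) : 0 < ∫ x, rho n s x := by
  have hd : ∀ a b : ℝ, 0 < a → a < b → H Phi (rho n s) b < H Phi (rho n s) a := fun a b ha hab => by
    obtain ⟨q, hq, e, hq2⟩ := H_diff hn hs (A_dec hn hs) (rho_dec hn hs) Phi_cont Phi_bdd ha hab.le
    have hb : 0 < b := ha.trans hab
    have : 0 < ∫ μ in b⁻¹..a⁻¹, q μ := by
      refine intervalIntegral.intervalIntegral_pos_of_pos_on hq (fun x hx => ?_)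
        (inv_strictAnti₀ ha hab)
      have hx0 : 0 < x := (inv_pos.2 hb).trans hx.1
      rw [hq2 x hx0]
      exact mul_pos (inv_pos.2 hx0) (HA_pos hn hs (inv_pos.2 hx0))
    simp only [rho]
    linarith
  have hi : Integrable (rho n s) := (rho_dec hn hs).int (by linarith [hs.1])
  have ht := H_top hn hi Phi_cont Phi_bdd (Phi_Cc.2)
  have hz := H_zero hi Phi_cont Phi_bdd
  have h2 : 0 ≤ H Phi (rho n s) 2 := by
    refine le_of_tendsto ht ?_
    filter_upwards [eventually_gt_atTop 2] with b hb
    exact (hd 2 b two_pos hb).le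
  have h1 : H Phi (rho n s) 1 ≤ Phi (0 : Eu n) * ∫ x, rho n s x := by
    refine ge_of_tendsto hz ?_
    have : Iio (1:ℝ) ∈ 𝓝[>] (0:ℝ) := mem_nhdsWithin_of_mem_nhds (Iio_mem_nhds one_pos)
    filter_upwards [self_mem_nhdsWithin, this] with a ha ha1
    exact (hd a 1 ha ha1).le
  have h3 := hd 1 2 one_pos one_lt_two
  have : 0 < Phi (0 : Eu n) * ∫ x, rho n s x := by linarith
  exact (mul_pos_iff_of_pos_left Phi_pos).1 this

end SHarm

namespace SHarm

variable {n : ℕ}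

lemma SH_of {s : ℝ} {u : Eu n → ℝ} {x : Eu n} (h : Filter.Tendsto
              (fun ε : ℝ => ∫ y in {y : EuclideanSpace ℝ (Fin n) | ε < ‖y - x‖},
                (u x - u y) / ‖x - y‖ ^ ((n : ℝ) + 2 * s))
              (𝓝[>] (0:ℝ)) (𝓝 0)) : SH s u x := by
  refine h.congr fun ε => ?_
  have hm : MeasurableSet {y : Eu n | ε < ‖y - x‖} := measurableSet_lt measurable_const (by fun_prop)
  rw [← integral_indicator hm, ← integral_add_left_eq_self _ x]
  congr 1; ext z
  by_cases hz : ε < ‖z‖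
  · have h1 : x + z ∈ {y : Eu n | ε < ‖y - x‖} := by simpa using hz
    have h2 : Kt n s ε z = K n s z := indicator_of_mem (s := {z : Eu n | ε < ‖z‖}) hz _
    rw [indicator_of_mem h1, h2]
    simp only [sub_add_cancel_left, norm_neg, K]
    rw [Real.rpow_neg (norm_nonneg _), div_eq_inv_mul]
  · have h1 : x + z ∉ {y : Eu n | ε < ‖y - x‖} := by simpa using hz
    have h2 : Kt n s ε z = 0 := indicator_of_notMem (s := {z : Eu n | ε < ‖z‖}) hz _
    rw [indicator_of_notMem h1, h2, zero_mul]

lemma Kt_scale {s ε t : ℝ} (ht : 0 < t) (z : Eu n) :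
    Kt n s ε z = t ^ ((n:ℝ) + 2 * s) * Kt n s (t * ε) (t • z) := by
  have hnorm : ‖t • z‖ = t * ‖z‖ := by rw [norm_smul, Real.norm_of_nonneg ht.le]
  by_cases hz : ε < ‖z‖
  · have h1 : Kt n s ε z = K n s z := indicator_of_mem (s := {z : Eu n | ε < ‖z‖}) hz _
    have h2 : Kt n s (t * ε) (t • z) = K n s (t • z) :=
      indicator_of_mem (s := {z : Eu n | t * ε < ‖z‖})
        (by simpa only [mem_ofPred_eq, hnorm] using mul_lt_mul_of_pos_left hz ht) _
    rw [h1, h2]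
    simp only [K, hnorm]
    rw [Real.mul_rpow ht.le (norm_nonneg _), ← mul_assoc, ← Real.rpow_add ht]
    simp
  · have h1 : Kt n s ε z = 0 := indicator_of_notMem (s := {z : Eu n | ε < ‖z‖}) hz _
    have h2 : Kt n s (t * ε) (t • z) = 0 :=
      indicator_of_notMem (s := {z : Eu n | t * ε < ‖z‖})
        (by simpa only [mem_ofPred_eq, hnorm, mul_lt_mul_iff_right₀ ht] using hz) _
    rw [h1, h2, mul_zero]

lemma SH.scale {s : ℝ} {u : Eu n → ℝ} {x0 x : Eu n} {t : ℝ} (ht : 0 < t) (h : SH s u (x0 + t • x)) :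
    SH s (fun y => u (x0 + t • y)) x := by
  have ht' : Tendsto (fun ε : ℝ => t * ε) (𝓝[>] 0) (𝓝[>] 0) := by
    refine tendsto_nhdsWithin_iff.2 ⟨?_, ?_⟩
    · have : Tendsto (fun ε : ℝ => t * ε) (𝓝 0) (𝓝 (t * 0)) := (continuous_const_mul t).tendsto 0
      rw [mul_zero] at this
      exact this.mono_left nhdsWithin_le_nhds
    · filter_upwards [self_mem_nhdsWithin] with ε hε
      exact mul_pos ht hε
  have h1 := (Tendsto.comp h ht').const_mul (t ^ ((n:ℝ) + 2 * s) * |(t ^ Module.finrank ℝ (Eu n))⁻¹|)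
  rw [mul_zero] at h1
  refine h1.congr fun ε => ?_
  simp only [Function.comp]
  have h2 := Measure.integral_comp_smul (volume : Measure (Eu n))
    (fun z => Kt n s (t * ε) z * (u (x0 + t • x) - u (x0 + t • x + z))) t
  rw [smul_eq_mul] at h2
  rw [mul_assoc, ← h2, ← integral_const_mul]
  congr 1; ext z
  rw [Kt_scale (ε := ε) ht z, smul_add, add_assoc]
  ring

lemma Kt_pos (hn : 1 ≤ n) {s : ℝ} (hs : s ∈ Ioo (0:ℝ) 1) {ε : ℝ} (hε : 0 < ε) :
    0 < ∫ z, Kt n s ε z := by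
  rw [integral_pos_iff_support_of_nonneg (Kt_nonneg ε) (Kt_int hn hs hε)]
  have hop : IsOpen {z : Eu n | ε < ‖z‖} := isOpen_lt continuous_const continuous_norm
  have hne : {z : Eu n | ε < ‖z‖}.Nonempty := by
    refine ⟨EuclideanSpace.single ⟨0, hn⟩ (2 * ε), ?_⟩
    simp only [mem_ofPred_eq, PiLp.norm_single]
    rw [Real.norm_of_nonneg (by positivity)]
    linarith
  refine (hop.measure_pos volume hne).trans_le (measure_mono fun z hz => ?_)
  rw [Function.mem_support]
  have h1 : Kt n s ε z = K n s z := indicator_of_mem (s := {z : Eu n | ε < ‖z‖}) hz _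
  rw [h1]
  have hz' : ε < ‖z‖ := hz
  exact (Real.rpow_pos_of_pos (hε.trans hz') _).ne'

lemma max_le_aux (hn : 1 ≤ n) {s : ℝ} (hs : s ∈ Ioo (0:ℝ) 1) {r : ℝ} (hr : 0 < r) {u : Eu n → ℝ}
    {M0 : ℝ} (hM0 : ∀ x, |u x| ≤ M0) (hu : Continuous u) (hh : ∀ x ∈ ball (0 : Eu n) r, SH s u x)
    {M : ℝ} (hM : ∀ y ∉ ball (0 : Eu n) r, u y ≤ M) (x : Eu n) : u x ≤ M := by
  by_contra hx
  push Not at hx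
  obtain ⟨x0, hx0, hmax⟩ := (isCompact_closedBall (0 : Eu n) r).exists_isMaxOn
    ⟨0, mem_closedBall_self hr.le⟩ hu.continuousOn
  have hxb : x ∈ ball (0 : Eu n) r := by
    by_contra hc
    exact absurd (hM x hc) (not_le.2 hx)
  have h0 : M < u x0 := hx.trans_le (hmax (ball_subset_closedBall hxb))
  have hx0b : x0 ∈ ball (0 : Eu n) r := by
    by_contra hc
    exact absurd (hM x0 hc) (not_le.2 h0)
  have hall : ∀ y, u y ≤ u x0 := fun y => by
    by_cases hy : y ∈ ball (0 : Eu n) r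
    · exact hmax (ball_subset_closedBall hy)
    · exact (hM y hy).trans h0.le
  have h2r : 0 < 2 * r := by positivity
  have hc : 0 < ∫ z, Kt n s (2 * r) z * (u x0 - M) := by
    rw [integral_mul_const]
    exact mul_pos (Kt_pos hn hs h2r) (by linarith)
  refine absurd (ge_of_tendsto (hh x0 hx0b) ?_) (not_le.2 hc)
  have : Iio (2 * r) ∈ 𝓝[>] (0:ℝ) := mem_nhdsWithin_of_mem_nhds (Iio_mem_nhds h2r)
  filter_upwards [self_mem_nhdsWithin, this] with ε hε hε2
  refine integral_mono ((Kt_int hn hs h2r).mul_const _) (Kt_D2_eq hn hs hu hM0 hε x0).1 fun z => ?_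
  by_cases hz : 2 * r < ‖z‖
  · have e1 : Kt n s (2 * r) z = K n s z := indicator_of_mem (s := {z : Eu n | 2 * r < ‖z‖}) hz _
    have e2 : Kt n s ε z = K n s z := indicator_of_mem (s := {z : Eu n | ε < ‖z‖}) (lt_trans hε2 hz) _
    simp only [e1, e2]
    refine mul_le_mul_of_nonneg_left ?_ (K_nonneg z)
    have : u (x0 + z) ≤ M := hM _ (by
      rw [mem_ball_zero_iff, not_lt]
      rw [mem_ball_zero_iff] at hx0b
      have := norm_sub_norm_le z (-x0)
      rw [norm_neg, sub_neg_eq_add, add_comm z] at this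
      linarith)
    linarith
  · have e1 : Kt n s (2 * r) z = 0 := indicator_of_notMem (s := {z : Eu n | 2 * r < ‖z‖}) hz _
    simp only [e1, zero_mul]
    exact mul_nonneg (Kt_nonneg ε z) (by linarith [hall (x0 + z)])

lemma max_abs (hn : 1 ≤ n) {s : ℝ} (hs : s ∈ Ioo (0:ℝ) 1) {r : ℝ} (hr : 0 < r) {u : Eu n → ℝ}
    {M0 : ℝ} (hM0 : ∀ x, |u x| ≤ M0) (hu : Continuous u) (hh : ∀ x ∈ ball (0 : Eu n) r, SH s u x)
    {M : ℝ} (hM : ∀ y ∉ ball (0 : Eu n) r, |u y| ≤ M) (x : Eu n) : |u x| ≤ M := by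
  rw [abs_le]
  have h1 := max_le_aux hn hs hr hM0 hu hh (fun y hy => (abs_le.1 (hM y hy)).2) x
  have h2 := max_le_aux hn hs hr (u := fun y => - u y) (M0 := M0) (by simpa using hM0) hu.neg
    (fun x hx => (hh x hx).neg) (fun y hy => neg_le.1 (abs_le.1 (hM y hy)).1) x
  constructor <;> linarith

lemma repr (hn : 1 ≤ n) {s : ℝ} (hs : s ∈ Ioo (0:ℝ) 1) {r : ℝ} (hr : 0 < r) {u : Eu n → ℝ}
    {M : ℝ} (hM : ∀ x, |u x| ≤ M) (hu : Continuous u) (hh : ∀ x ∈ ball (0 : Eu n) r, SH s u x)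
    {x0 : Eu n} (hx0 : x0 ∈ ball (0 : Eu n) (r / 2)) :
    u x0 * ∫ y, rho n s y = ∫ y, u (x0 + (r / 4) • y) * rho n s y := by
  set v : Eu n → ℝ := fun y => u (x0 + y) with hv
  have hvc : Continuous v := by fun_prop
  have hvM : ∀ x, |v x| ≤ M := fun x => hM _
  have hr4 : 0 < r / 4 := by positivity
  have hA : ∀ t, 0 < t → t ≤ r / 4 → H v (T s Phi) t = 0 := fun t ht htr => by
    refine weak hn hs Phi_Cc Phi_nonneg (v := fun y => u (x0 + t • y)) (M := M) (fun y => hM _) (by fun_prop)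
      fun x hx => SH.scale ht (hh _ ?_)
    rw [mem_ball_zero_iff] at hx hx0 ⊢
    calc ‖x0 + t • x‖ ≤ ‖x0‖ + t * ‖x‖ := by
          refine (norm_add_le _ _).trans_eq ?_
          rw [norm_smul, Real.norm_of_nonneg ht.le]
      _ < r / 2 + (r / 4) * 2 := by
          have : t * ‖x‖ ≤ (r / 4) * 2 := by gcongr
          linarith
      _ = r := by ring
  have hd : ∀ a, 0 < a → a ≤ r / 4 → H v (rho n s) a = H v (rho n s) (r / 4) := fun a ha hab => by
    obtain ⟨q, hq, e, hq2⟩ := H_diff hn hs (A_dec hn hs) (rho_dec hn hs) hvc hvM ha hab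
    have : ∫ μ in (r / 4)⁻¹..a⁻¹, q μ = ∫ μ in (r / 4)⁻¹..a⁻¹, (0:ℝ) := by
      refine intervalIntegral.integral_congr fun μ hμ => ?_
      rw [uIcc_of_le (inv_anti₀ ha hab)] at hμ
      have hμ0 : 0 < μ := (inv_pos.2 hr4).trans_le hμ.1
      simp only [hq2 μ hμ0]
      rw [hA μ⁻¹ (inv_pos.2 hμ0) (inv_le_of_inv_le₀ hr4 hμ.1), mul_zero]
    rw [this, intervalIntegral.integral_zero] at e
    simp only [rho]
    linarith
  have hi : Integrable (rho n s) := (rho_dec hn hs).int (by linarith [hs.1])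
  have hz := H_zero hi hvc hvM
  have hz2 : Tendsto (H v (rho n s)) (𝓝[>] 0) (𝓝 (H v (rho n s) (r / 4))) := by
    refine tendsto_const_nhds.congr' ?_
    have : Iio (r / 4) ∈ 𝓝[>] (0:ℝ) := mem_nhdsWithin_of_mem_nhds (Iio_mem_nhds hr4)
    filter_upwards [self_mem_nhdsWithin, this] with a ha ha1
    exact (hd a ha (le_of_lt ha1)).symm
  have := tendsto_nhds_unique hz hz2
  simpa [hv, H] using this

lemma repr2 (hn : 1 ≤ n) {s : ℝ} (hs : s ∈ Ioo (0:ℝ) 1) {r : ℝ} (hr : 0 < r) {u : Eu n → ℝ}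
    {M : ℝ} (hM : ∀ x, |u x| ≤ M) (hu : Continuous u) (hh : ∀ x ∈ ball (0 : Eu n) r, SH s u x)
    {x0 : Eu n} (hx0 : x0 ∈ ball (0 : Eu n) (r / 2)) :
    u x0 = Cv (fun y => (∫ y, rho n s y)⁻¹ * u ((r / 4) • y)) (rho n s) ((r / 4)⁻¹ • x0) := by
  have h := repr hn hs hr hM hu hh hx0
  have hm := rho_pos hn hs
  have hr4 : r / 4 ≠ 0 := by positivity
  have e : ∫ y, u ((r / 4) • y) * rho n s ((r / 4)⁻¹ • x0 - y) = ∫ y, u (x0 + (r / 4) • y) * rho n s y := by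
    rw [← integral_add_left_eq_self _ ((r / 4)⁻¹ • x0)]
    congr 1; ext y
    rw [sub_add_cancel_left, rho_even, smul_add, smul_inv_smul₀ hr4]
  unfold Cv
  simp only [smul_eq_mul, mul_assoc]
  rw [integral_const_mul, e, ← h]
  field_simp

end SHarm

namespace SHarm

/-- Smooth with bounded derivatives. -/
def BS {n : ℕ} (f : Eu n → ℝ) (B : ℕ → ℝ) : Prop :=
  ContDiff ℝ (⊤ : ℕ∞) f ∧ ∀ j x, ‖iteratedFDeriv ℝ j f x‖ ≤ B j

lemma BS.pd {n : ℕ} {f : Eu n → ℝ} {B : ℕ → ℝ} (h : BS f B) (i : Fin n) :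
    BS (partialDeriv n i f) (fun j => B (j + 1)) := by
  set e : Eu n := EuclideanSpace.single i 1
  have he : ‖e‖ = 1 := by simp [e]
  have hd : ContDiff ℝ (⊤ : ℕ∞) (fderiv ℝ f) := h.1.fderiv_right (by simp)
  have heq : partialDeriv n i f = (ContinuousLinearMap.apply ℝ ℝ e) ∘ (fderiv ℝ f) := rfl
  refine ⟨?_, fun j x => ?_⟩
  · rw [heq]
    exact (ContinuousLinearMap.contDiff _).comp hd
  · rw [heq]
    refine (ContinuousLinearMap.norm_iteratedFDeriv_comp_left _ hd.contDiffAt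
      (by exact_mod_cast le_top)).trans ?_
    rw [norm_iteratedFDeriv_fderiv]
    have h1 : ‖ContinuousLinearMap.apply ℝ ℝ e‖ ≤ 1 := by
      refine ContinuousLinearMap.opNorm_le_bound _ zero_le_one fun g => ?_
      have := g.le_opNorm e
      rw [he] at this
      simp only [ContinuousLinearMap.apply_apply]
      linarith
    calc _ ≤ 1 * ‖iteratedFDeriv ℝ (j + 1) f x‖ := by gcongr
      _ ≤ _ := by rw [one_mul]; exact h.2 _ _

lemma BS.iter {n : ℕ} (i : Fin n) (k : ℕ) : ∀ {f : Eu n → ℝ} {B : ℕ → ℝ}, BS f B →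
    BS ((partialDeriv n i)^[k] f) (fun j => B (j + k)) := by
  induction k with
  | zero => intro f B h; exact h
  | succ k ih =>
    intro f B h
    have := ih (h.pd i)
    rw [Function.iterate_succ_apply]
    convert this using 3
    ring

lemma BS.fold {n : ℕ} (β : Fin n → ℕ) (l : List (Fin n)) {f : Eu n → ℝ} {B : ℕ → ℝ} (h : BS f B) :
    BS (((l.map (fun i => (partialDeriv n i)^[β i])).foldr (· ∘ ·) id) f)
      (fun j => B (j + (l.map β).sum)) := by
  induction l with
  | nil => exact h
  | cons i l ih =>
    have := BS.iter i (β i) ih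
    simp only [List.map_cons, List.foldr_cons, List.sum_cons, Function.comp]
    convert this using 3
    ring

lemma BS.multi {n : ℕ} (β : Fin n → ℕ) {f : Eu n → ℝ} {B : ℕ → ℝ} (h : BS f B) (x : Eu n) :
    |multiDeriv n β f x| ≤ B (∑ i, β i) := by
  have := (BS.fold β (List.finRange n) h).2 0 x
  rw [norm_iteratedFDeriv_zero] at this
  rw [← List.ofFn_eq_map, ← List.ofFn_eq_map, List.sum_ofFn] at this
  simp only [zero_add] at this
  exact this

lemma iter_congr {n : ℕ} {U : Set (Eu n)} (hU : IsOpen U) (i : Fin n) (k : ℕ) :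
    ∀ {f g : Eu n → ℝ}, EqOn f g U → EqOn ((partialDeriv n i)^[k] f) ((partialDeriv n i)^[k] g) U := by
  induction k with
  | zero => intro f g h; exact h
  | succ k ih =>
    intro f g h
    rw [Function.iterate_succ_apply, Function.iterate_succ_apply]
    refine ih fun x hx => ?_
    have : f =ᶠ[𝓝 x] g := by
      filter_upwards [hU.mem_nhds hx] with y hy using h hy
    simp only [partialDeriv, this.fderiv_eq]

lemma multi_congr {n : ℕ} {U : Set (Eu n)} (hU : IsOpen U) (β : Fin n → ℕ) {f g : Eu n → ℝ}
    (h : EqOn f g U) : EqOn (multiDeriv n β f) (multiDeriv n β g) U := by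
  unfold multiDeriv
  rw [List.ofFn_eq_map]
  induction List.finRange n with
  | nil => exact h
  | cons i l ih => exact iter_congr hU i (β i) ih

end SHarm

theorem sHarmonic_interior_smoothness
    (n : ℕ) (hn : 1 ≤ n) (s : ℝ) (hs : s ∈ Set.Ioo (0:ℝ) 1) (β : Fin n → ℕ) :
    ∃ C : ℝ, 0 < C ∧
      ∀ (r : ℝ), 0 < r →
        ∀ u : EuclideanSpace ℝ (Fin n) → ℝ,
          (∃ M : ℝ, ∀ x, |u x| ≤ M) → Continuous u →
          (∀ x ∈ Metric.ball (0 : EuclideanSpace ℝ (Fin n)) r,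
            Filter.Tendsto
              (fun ε : ℝ => ∫ y in {y : EuclideanSpace ℝ (Fin n) | ε < ‖y - x‖},
                (u x - u y) / ‖x - y‖ ^ ((n : ℝ) + 2 * s))
              (𝓝[>] (0:ℝ)) (𝓝 0)) →
          ContDiffOn ℝ (⊤ : ℕ∞) u (Metric.ball (0 : EuclideanSpace ℝ (Fin n)) (r / 2)) ∧
          ∀ M : ℝ, (∀ y ∉ Metric.ball (0 : EuclideanSpace ℝ (Fin n)) r, |u y| ≤ M) →
            ∀ x ∈ Metric.ball (0 : EuclideanSpace ℝ (Fin n)) (r / 2),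
              |multiDeriv n β u x| ≤ C * r ^ (-((∑ i, β i : ℕ) : ℝ)) * M := by
  have hm := SHarm.rho_pos hn hs
  set m := ∫ y, SHarm.rho n s y with hmd
  have hα : (n:ℝ) < n + s := by linarith [hs.1]
  choose C hC0 hC using fun k => SHarm.Cv_contDiff hα k (SHarm.rho_dec hn hs)
  set k := ∑ i, β i with hk
  refine ⟨C k * m⁻¹ * 4 ^ k + 1, by have := hC0 k; positivity, ?_⟩
  rintro r hr u ⟨M0, hM0⟩ hu hharm
  have hh : ∀ x ∈ ball (0 : SHarm.Eu n) r, SHarm.SH s u x := fun x hx => SHarm.SH_of (hharm x hx)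
  set w : SHarm.Eu n → ℝ := fun y => m⁻¹ * u ((r / 4) • y) with hw
  have hwc : Continuous w := by fun_prop
  have hwM : ∀ M, (∀ x, |u x| ≤ M) → ∀ x, |w x| ≤ m⁻¹ * M := fun M hM x => by
    simp only [hw]
    rw [abs_mul, abs_of_pos (inv_pos.2 hm)]
    exact mul_le_mul_of_nonneg_left (hM _) (inv_pos.2 hm).le
  set g : SHarm.Eu n → ℝ := SHarm.Cv w (SHarm.rho n s) with hg
  have hgs : ContDiff ℝ (⊤ : ℕ∞) g := contDiff_infty.2 fun j => (hC j w _ hwc (hwM M0 hM0)).1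
  set F : SHarm.Eu n → ℝ := fun x => g ((r / 4)⁻¹ • x) with hF
  have hFs : ContDiff ℝ (⊤ : ℕ∞) F := hgs.comp (contDiff_const_smul _)
  have hEq : EqOn u F (ball 0 (r / 2)) := fun x hx => SHarm.repr2 hn hs hr hM0 hu hh hx
  refine ⟨hFs.contDiffOn.congr hEq, fun M hM x hx => ?_⟩
  have hMa := SHarm.max_abs hn hs hr hM0 hu hh hM
  have hMn : 0 ≤ M := (abs_nonneg _).trans (hMa 0)
  have hB : SHarm.BS F (fun j => (r / 4)⁻¹ ^ j * (C j * (m⁻¹ * M))) := by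
    refine ⟨hFs, fun j y => ?_⟩
    have hj := hC j w _ hwc (hwM M hMa)
    have e := congrFun (iteratedFDeriv_comp_const_smul ((r / 4)⁻¹) hj.1) y
    simp only [hF]
    rw [e, norm_smul, norm_pow, Real.norm_of_nonneg (by positivity)]
    gcongr
    exact hj.2 _
  rw [SHarm.multi_congr isOpen_ball β hEq hx]
  refine (SHarm.BS.multi β hB x).trans ?_
  rw [← hk, Real.rpow_neg hr.le, Real.rpow_natCast, inv_div, div_pow]
  have h1 : 0 ≤ (r ^ k)⁻¹ * M := by positivity
  calc 4 ^ k / r ^ k * (C k * (m⁻¹ * M)) = C k * m⁻¹ * 4 ^ k * ((r ^ k)⁻¹ * M) := by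
        rw [div_eq_mul_inv]; ring
    _ ≤ (C k * m⁻¹ * 4 ^ k + 1) * ((r ^ k)⁻¹ * M) := by
        refine mul_le_mul_of_nonneg_right (by linarith) h1
    _ = _ := by ring
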